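/- Every simple graph with minimum degree at least 5 contains a minor isomorphic to K_6^− (the complete graph on 6 vertices with one edge removed) or a minor isomorphic to the icosahedral graph. -/

import Mathlib

attribute [local instance] Classical.propDecidable

/-- `G` has an `H`-minor: pairwise disjoint nonempty branch sets indexed by the vertices of `H`,
each inducing a connected subgraph of `G`, with an edge of `G` between the branch sets of any
two vertices adjacent in `H`. -/
def SimpleGraph.HasMinor {V W : Type*} (G : SimpleGraph V) (H : SimpleGraph W) : Prop :=
  ∃ B : W → Set V,
    (∀ w, (B w).Nonempty) ∧
    (∀ w, (G.induce (B w)).Connected) ∧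
    (∀ w w', w ≠ w' → Disjoint (B w) (B w')) ∧
    (∀ w w', H.Adj w w' → ∃ u ∈ B w, ∃ v ∈ B w', G.Adj u v)

/-- The icosahedral graph: vertices `a`, `b i`, `c i` (`i : Fin 5`), `z`, with edges
`a bᵢ`, `bᵢ bᵢ₊₁`, `bᵢ cᵢ`, `bᵢ cᵢ₊₁`, `cᵢ cᵢ₊₁` (indices mod 5), and `z cᵢ`. -/
def Icosa : SimpleGraph (Unit ⊕ Fin 5 ⊕ Fin 5 ⊕ Unit) :=
  SimpleGraph.fromRel fun u v =>
    match u, v with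
    | Sum.inl _, Sum.inr (Sum.inl _) => True
    | Sum.inr (Sum.inl i), Sum.inr (Sum.inl j) => j = i + 1
    | Sum.inr (Sum.inl i), Sum.inr (Sum.inr (Sum.inl j)) => j = i ∨ j = i + 1
    | Sum.inr (Sum.inr (Sum.inl i)), Sum.inr (Sum.inr (Sum.inl j)) => j = i + 1
    | Sum.inr (Sum.inr (Sum.inr _)), Sum.inr (Sum.inr (Sum.inl _)) => True
    | _, _ => False

/-- `K₆⁻`: the complete graph on 6 vertices with one edge removed. -/
def K6minus : SimpleGraph (Fin 6) := (⊤ : SimpleGraph (Fin 6)).deleteEdges {s(0, 1)}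

/-!
The proof is by induction on a stronger statement, which exempts a *root* from the degree
condition: a clique on at most three vertices, or a wheel with four spokes. Let `G` be a
counterexample with as few edges as possible. Contracting an edge, or cutting along a small
separator and contracting one side onto a root, must destroy the hypotheses, so every edge between
vertices of low degree lies in many triangles and every small separator is useless. This
excludes the nonempty roots one after the other. In a counterexample without a root, the vertices
of degree 5 have neighbourhoods inducing 5-cycles of vertices of degree 5 again, so `G` is
locally a 5-cycle and closes up to the icosahedron.
-/

namespace MinDegreeFive

open SimpleGraph

/-! ### Minors from branch sets -/

section

variable {V : Type*} {G G' : SimpleGraph V}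

/-- Two vertex sets are linked if some edge runs between them; this is how the branch sets of
adjacent vertices of a minor have to be related. -/
def Linked (G : SimpleGraph V) (S T : Set V) : Prop := ∃ a ∈ S, ∃ b ∈ T, G.Adj a b

theorem Linked.symm {S T : Set V} (h : Linked G S T) : Linked G T S := by
  obtain ⟨a, ha, b, hb, hab⟩ := h
  exact ⟨b, hb, a, ha, hab.symm⟩

theorem linked_singleton {a b : V} : Linked G {a} {b} ↔ G.Adj a b := by simp [Linked]

theorem connected_induce_singleton (a : V) : (G.induce {a}).Connected := by simp

theorem connected_induce_insert {S : Set V} {a b : V} (hS : (G.induce S).Connected) (hb : b ∈ S)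
    (hab : G.Adj a b) : (G.induce (insert a S)).Connected := by
  rw [← Set.singleton_union]
  exact connected_induce_union (connected_induce_singleton a).preconnected hS.preconnected rfl hb
    hab

theorem connected_induce_of_forall_adj {S : Set V} {x : V} (hx : x ∈ S)
    (h : ∀ y ∈ S, y ≠ x → G.Adj x y) : (G.induce S).Connected := by
  refine (connected_iff_exists_forall_reachable _).2 ⟨⟨x, hx⟩, fun ⟨y, hy⟩ => ?_⟩
  obtain rfl | hyx := eq_or_ne y x
  · exact .refl _
  · exact Adj.reachable (G := G.induce S) (h y hy hyx)

theorem mem_support_of_connected_induce {S : Set V} (hS : (G.induce S).Connected)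
    (hnt : S.Nontrivial) {v : V} (hv : v ∈ S) : v ∈ G.support := by
  have : Nontrivial S := hnt.coe_sort
  obtain ⟨w, hw⟩ := hS.preconnected.exists_adj_of_nontrivial ⟨v, hv⟩
  exact ⟨w, hw⟩

section Transfer

variable {V' W : Type*} {G' : SimpleGraph V'} {H : SimpleGraph W}

theorem connected_induce_biUnion {C : Set V'} {B : V' → Set V} (hC : (G'.induce C).Connected)
    (hB : ∀ v ∈ C, (G.induce (B v)).Connected)
    (hlink : ∀ v ∈ C, ∀ w ∈ C, G'.Adj v w → Linked G (B v) (B w)) :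
    (G.induce (⋃ v ∈ C, B v)).Connected := by
  set U := ⋃ v ∈ C, B v
  have hU : ∀ v ∈ C, B v ⊆ U := fun v hv => Set.subset_biUnion_of_mem hv
  have within (v) (hv : v ∈ C) (a b) (ha : a ∈ B v) (hb : b ∈ B v) :
      (G.induce U).Reachable ⟨a, hU v hv ha⟩ ⟨b, hU v hv hb⟩ :=
    ((hB v hv).preconnected ⟨a, ha⟩ ⟨b, hb⟩).map (induceHomOfLE G (hU v hv)).toHom
  have along (v w : C) (p : (G'.induce C).Walk v w) (a b) (ha : a ∈ B v) (hb : b ∈ B w) :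
      (G.induce U).Reachable ⟨a, hU v v.2 ha⟩ ⟨b, hU w w.2 hb⟩ := by
    induction p generalizing a with
    | nil => exact within _ (Subtype.prop _) a b ha hb
    | @cons v v' w hvv' _ ih =>
      obtain ⟨c, hc, d, hd, hcd⟩ := hlink v v.2 v' v'.2 hvv'
      refine (within v v.2 a c ha hc).trans (.trans ?_ (ih d hd hb))
      exact Adj.reachable (G := G.induce U) hcd
  obtain ⟨⟨v, hv⟩⟩ := hC.nonempty
  obtain ⟨⟨a, ha⟩⟩ := (hB v hv).nonempty
  refine (connected_iff_exists_forall_reachable _).2 ⟨⟨a, hU v hv ha⟩, fun ⟨b, hb⟩ => ?_⟩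
  obtain ⟨w, hw, hbw⟩ := Set.mem_iUnion₂.1 hb
  obtain ⟨p⟩ := hC.preconnected ⟨v, hv⟩ ⟨w, hw⟩
  exact along _ _ p a b ha hbw

/-- Transitivity of the minor relation, in a form that ignores the isolated vertices of the
intermediate graph. -/
theorem hasMinor_of_branchSets (hH : ∀ w, ∃ w', H.Adj w w') (B : V' → Set V)
    (hconn : ∀ v ∈ G'.support, (G.induce (B v)).Connected)
    (hdisj : G'.support.PairwiseDisjoint B)
    (hlink : ∀ v w, G'.Adj v w → Linked G (B v) (B w)) (hG' : G'.HasMinor H) :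
    G.HasMinor H := by
  obtain ⟨C, -, hCconn, hCdisj, hCadj⟩ := hG'
  have hsupp : ∀ w, C w ⊆ G'.support := by
    intro w v hv
    by_cases hnt : (C w).Nontrivial
    · exact mem_support_of_connected_induce (hCconn w) hnt hv
    · obtain ⟨w', hw'⟩ := hH w
      obtain ⟨a, ha, b, -, hab⟩ := hCadj w w' hw'
      rw [Set.not_nontrivial_iff.1 hnt hv ha]
      exact ⟨b, hab⟩
  have hUconn : ∀ w, (G.induce (⋃ v ∈ C w, B v)).Connected := fun w =>
    connected_induce_biUnion (hCconn w) (fun v hv => hconn v (hsupp w hv))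
      fun v _ v' _ => hlink v v'
  refine ⟨fun w => ⋃ v ∈ C w, B v, fun w => Set.nonempty_coe_sort.1 (hUconn w).nonempty, hUconn,
    fun w w' hww' => ?_, fun w w' hww' => ?_⟩
  · simp only [Set.disjoint_iUnion_left, Set.disjoint_iUnion_right]
    intro v' hv' v hv
    exact hdisj (hsupp w hv) (hsupp w' hv') ((hCdisj w w' hww').ne_of_mem hv hv')
  · obtain ⟨v, hv, v', hv', hvv'⟩ := hCadj w w' hww'
    obtain ⟨a, ha, b, hb, hab⟩ := hlink v v' hvv'
    exact ⟨a, Set.mem_biUnion hv ha, b, Set.mem_biUnion hv' hb, hab⟩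

theorem hasMinor_mono {G G' : SimpleGraph V} (h : G' ≤ G) (hG' : G'.HasMinor H) :
    G.HasMinor H := by
  obtain ⟨B, hne, hconn, hdisj, hadj⟩ := hG'
  refine ⟨B, hne, fun w => (hconn w).mono fun _ _ => @h _ _, hdisj, fun w w' hww' => ?_⟩
  obtain ⟨a, ha, b, hb, hab⟩ := hadj w w' hww'
  exact ⟨a, ha, b, hb, h hab⟩

end Transfer

/-- The conclusion of the theorem: `G` has a `K₆⁻`-minor or an icosahedron minor. -/
def HasTargetMinor (G : SimpleGraph V) : Prop := G.HasMinor K6minus ∨ G.HasMinor Icosa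

theorem exists_adj_K6minus (w : Fin 6) : ∃ w', K6minus.Adj w w' := by
  by_cases hw : w = 2
  · exact ⟨3, by simp [K6minus, hw]⟩
  · exact ⟨2, by simp [K6minus, hw]⟩

theorem exists_adj_Icosa (w : Unit ⊕ Fin 5 ⊕ Fin 5 ⊕ Unit) : ∃ w', Icosa.Adj w w' := by
  rcases w with w | w | w | w
  · exact ⟨.inr (.inl 0), by simp [Icosa]⟩
  · exact ⟨.inl (), by simp [Icosa]⟩
  · exact ⟨.inr (.inr (.inr ())), by simp [Icosa]⟩
  · exact ⟨.inr (.inr (.inl 0)), by simp [Icosa]⟩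

theorem hasTargetMinor_of_branchSets {V' : Type*} {G' : SimpleGraph V'} (B : V' → Set V)
    (hconn : ∀ v ∈ G'.support, (G.induce (B v)).Connected)
    (hdisj : G'.support.PairwiseDisjoint B)
    (hlink : ∀ v w, G'.Adj v w → Linked G (B v) (B w)) (hG' : HasTargetMinor G') :
    HasTargetMinor G :=
  hG'.imp (hasMinor_of_branchSets exists_adj_K6minus B hconn hdisj hlink)
    (hasMinor_of_branchSets exists_adj_Icosa B hconn hdisj hlink)

theorem HasTargetMinor.mono (h : G' ≤ G) (hG' : HasTargetMinor G') : HasTargetMinor G :=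
  hG'.imp (hasMinor_mono h) (hasMinor_mono h)

theorem hasMinor_K6minus_of_branchSets {A B C D E F : Set V}
    (hconn : ∀ S ∈ [A, B, C, D, E, F], (G.induce S).Connected)
    (hdisj : [A, B, C, D, E, F].Pairwise Disjoint)
    (hA : ∀ S ∈ [C, D, E, F], Linked G A S) (hB : ∀ S ∈ [C, D, E, F], Linked G B S)
    (hlink : [C, D, E, F].Pairwise (Linked G)) : G.HasMinor K6minus := by
  have hconn' (w) : (G.induce (![A, B, C, D, E, F] w)).Connected := by
    apply hconn
    fin_cases w <;> simp
  simp only [List.pairwise_cons, List.mem_cons, List.not_mem_nil, or_false, forall_eq_or_imp,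
    forall_eq] at hdisj hA hB hlink
  refine ⟨![A, B, C, D, E, F], fun w => Set.nonempty_coe_sort.1 (hconn' w).nonempty, hconn',
    fun w w' => ?_, fun w w' h => ?_⟩
  · fin_cases w <;> fin_cases w' <;> simp [hdisj, disjoint_comm]
  · change Linked G _ _
    have := @Linked.symm V G
    fin_cases w <;> fin_cases w' <;> simp [K6minus] at h <;> simp_all

theorem hasMinor_K6minus_of_adj {a b c d e f : V} (hab : a ≠ b)
    (ha : ∀ v ∈ [c, d, e, f], G.Adj a v) (hb : ∀ v ∈ [c, d, e, f], G.Adj b v)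
    (hadj : [c, d, e, f].Pairwise G.Adj) : G.HasMinor K6minus := by
  apply hasMinor_K6minus_of_branchSets (A := {a}) (B := {b}) (C := {c}) (D := {d}) (E := {e})
    (F := {f}) <;> simp_all only [List.mem_cons, List.not_mem_nil, or_false, forall_eq_or_imp,
      forall_eq, List.pairwise_cons, linked_singleton, connected_induce_singleton,
      Set.disjoint_singleton] <;> grind [SimpleGraph.Adj.ne]

theorem hasMinor_Icosa_of_adj (a z : V) (b c : Fin 5 → V) (hb : Function.Injective b)
    (hc : Function.Injective c) (hab : ∀ i, G.Adj a (b i)) (hbb : ∀ i, G.Adj (b i) (b (i + 1)))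
    (hbc : ∀ i, G.Adj (b i) (c i)) (hbc' : ∀ i, G.Adj (b i) (c (i + 1)))
    (hcc : ∀ i, G.Adj (c i) (c (i + 1))) (hzc : ∀ i, G.Adj z (c i))
    (hac : ∀ i, a ≠ c i) (haz : a ≠ z) (hne : ∀ i j, b i ≠ c j) (hbz : ∀ i, b i ≠ z) :
    G.HasMinor Icosa := by
  let φ : Unit ⊕ Fin 5 ⊕ Fin 5 ⊕ Unit → V :=
    Sum.elim (fun _ => a) (Sum.elim b (Sum.elim c fun _ => z))
  have hφ : Function.Injective φ :=
    .sumElim (Function.injective_of_subsingleton _)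
      (.sumElim hb (.sumElim hc (Function.injective_of_subsingleton _) fun i _ => (hzc i).ne')
        (by rintro i (j | -) <;> simp [hne, hbz]))
      (by rintro - (i | i | -) <;> simp [(hab _).ne, hac, haz])
  refine ⟨fun w => {φ w}, by simp, fun w => connected_induce_singleton _,
    fun w w' hww' => by simpa using hφ.ne hww', ?_⟩
  rintro (w | w | w | w) (w' | w' | w' | w') <;> simp [Icosa, φ] <;>
    grind [SimpleGraph.Adj.symm]

end

/-! ### Degrees and contractions -/

section

section Degree

theorem card_le_degree_of_injOn {V V' : Type*} [Fintype V'] {G' : SimpleGraph V'} {f : V → V'}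
    {v' : V'} {S : Finset V} (hf : Set.InjOn f S) (hS : ∀ w ∈ S, G'.Adj v' (f w)) :
    S.card ≤ G'.degree v' :=
  Finset.card_le_card_of_injOn f (fun w hw => (G'.mem_neighborFinset v' _).2 (hS w hw)) hf

variable {V : Type*} [Fintype V] {G : SimpleGraph V} {v : V}

theorem card_le_degree {S : Finset V} (h : ∀ w ∈ S, G.Adj v w) : S.card ≤ G.degree v :=
  Finset.card_le_card fun w hw => (G.mem_neighborFinset v w).2 (h w hw)

theorem adj_iff_mem_of_card_le_degree {S : Finset V} (h : ∀ w, G.Adj v w → w ∈ S)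
    (hS : S.card ≤ G.degree v) (w : V) : G.Adj v w ↔ w ∈ S := by
  rw [← Finset.eq_of_subset_of_card_le (fun w hw => h w ((G.mem_neighborFinset v w).1 hw)) hS,
    mem_neighborFinset]

theorem length_le_degree {l : List V} (hl : l.Nodup) (h : ∀ w ∈ l, G.Adj v w) :
    l.length ≤ G.degree v := by
  rw [← List.toFinset_card_of_nodup hl]
  exact card_le_degree (by simpa using h)

theorem adj_iff_mem_of_degree_le_length {l : List V} (hl : l.Nodup) (h : ∀ w ∈ l, G.Adj v w)
    (hv : G.degree v ≤ l.length) (w : V) : G.Adj v w ↔ w ∈ l := by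
  rw [← List.toFinset_card_of_nodup hl] at hv
  rw [← List.mem_toFinset, Finset.eq_of_subset_of_card_le
    (fun w hw => (G.mem_neighborFinset v w).2 (h w (List.mem_toFinset.1 hw))) hv,
    mem_neighborFinset]

theorem exists_adj_notMem_of_card_lt_degree {S : Finset V} (h : S.card < G.degree v) :
    ∃ w, G.Adj v w ∧ w ∉ S := by
  simpa using Finset.exists_mem_notMem_of_card_lt_card h

theorem exists_adj_ne_four (h : 5 ≤ G.degree v) (a b c d : V) :
    ∃ w, G.Adj v w ∧ w ≠ a ∧ w ≠ b ∧ w ≠ c ∧ w ≠ d := by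
  simpa using exists_adj_notMem_of_card_lt_degree (S := {a, b, c, d})
    (Finset.card_le_four.trans_lt h)

theorem degree_le_degree_of_adj_imp {G' : SimpleGraph V} (h : ∀ w, G.Adj v w → G'.Adj v w) :
    G.degree v ≤ G'.degree v :=
  card_le_degree fun w hw => h w ((G.mem_neighborFinset v w).1 hw)

end Degree

theorem induce_spanningCoe_adj {V : Type*} {G : SimpleGraph V} {S : Set V} {a b : V} :
    (G.induce S).spanningCoe.Adj a b ↔ G.Adj a b ∧ a ∈ S ∧ b ∈ S := by
  simp

section Contraction

variable {V : Type*} {G G' : SimpleGraph V}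

theorem hasTargetMinor_of_map {V' : Type*} {f : V → V'}
    (hf : ∀ v ∈ (G.map f).support, (G.induce (f ⁻¹' {v})).Connected)
    (h : HasTargetMinor (G.map f)) : HasTargetMinor G := by
  refine hasTargetMinor_of_branchSets (fun v => f ⁻¹' {v}) hf
    (fun v _ w _ hvw => Disjoint.preimage f (by simpa using hvw)) ?_ h
  rintro _ _ ⟨-, a, b, hab, rfl, rfl⟩
  exact ⟨a, rfl, b, rfl, hab⟩

/-- The map that moves all of the vertex set `F` onto the vertex `x`. -/
noncomputable def collapse (F : Set V) (x v : V) : V := if v ∈ F then x else v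

/-- The contraction of a vertex set `F` to its member `x`, on the same vertex type: the other
vertices of `F` become isolated. -/
noncomputable def contract (G : SimpleGraph V) (F : Set V) (x : V) : SimpleGraph V :=
  G.map (collapse F x)

variable {F : Set V} {x : V}

theorem collapse_of_mem {v : V} (hv : v ∈ F) : collapse F x v = x := if_pos hv

theorem collapse_of_notMem {v : V} (hv : v ∉ F) : collapse F x v = v := if_neg hv

theorem contract_adj_collapse {a b : V} (hx : x ∈ F) (ha : a ∉ F) (hab : G.Adj a b) :
    (contract G F x).Adj a (collapse F x b) := by
  refine ⟨?_, a, b, hab, collapse_of_notMem ha, rfl⟩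
  by_cases hb : b ∈ F
  · rw [collapse_of_mem hb]
    exact (ne_of_mem_of_not_mem hx ha).symm
  · rw [collapse_of_notMem hb]
    exact hab.ne

theorem contract_adj_of_notMem {a b : V} (ha : a ∉ F) (hb : b ∉ F) (hab : G.Adj a b) :
    (contract G F x).Adj a b :=
  ⟨hab.ne, a, b, hab, collapse_of_notMem ha, collapse_of_notMem hb⟩

theorem contract_adj_of_mem {a b : V} (hx : x ∈ F) (ha : a ∈ F) (hb : b ∉ F) (hab : G.Adj a b) :
    (contract G F x).Adj x b := by
  simpa only [collapse_of_mem ha] using (contract_adj_collapse hx hb hab.symm).symm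

theorem notMem_of_contract_adj {a b : V} (ha : a ≠ x) (hab : (contract G F x).Adj a b) :
    a ∉ F ∧ a ∈ G.support := by
  obtain ⟨-, a', b', hab', rfl, -⟩ := hab
  have ha' : a' ∉ F := fun h => ha (collapse_of_mem h)
  rw [collapse_of_notMem ha']
  exact ⟨ha', b', hab'⟩

theorem exists_adj_of_contract_adj {b : V} (hx : x ∈ F) (hab : (contract G F x).Adj x b) :
    ∃ f ∈ F, G.Adj f b := by
  obtain ⟨hne, a', b', hab', ha', rfl⟩ := hab
  have hb : b' ∉ F := fun h => hne (collapse_of_mem h).symm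
  refine ⟨a', ?_, by rwa [collapse_of_notMem hb]⟩
  by_contra ha
  rw [collapse_of_notMem ha] at ha'
  exact ha (ha' ▸ hx)

theorem isClique_erase_of_adj {a b c : V} (h : G.Adj b c) :
    G.IsClique (({a, b, c} : Finset V).erase a : Finset V) := by
  have := h.symm
  intro v hv w hw hvw
  grind

theorem isClique_contract {K : Finset V} (hx : x ∈ F) (hKF : ∀ k ∈ K, k ∈ F → k = x)
    (hK : G.IsClique (K.erase x : Finset V)) (hadj : ∀ b ∈ K, b ≠ x → ∃ f ∈ F, G.Adj f b) :
    (contract G F x).IsClique K := by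
  have hxb {b} (hb : b ∈ K) (hbx : b ≠ x) : (contract G F x).Adj x b := by
    obtain ⟨f, hf, hfb⟩ := hadj b hb hbx
    exact contract_adj_of_mem hx hf (fun h => hbx (hKF b hb h)) hfb
  intro a ha b hb hab
  obtain rfl | hax := eq_or_ne a x
  · exact hxb hb hab.symm
  obtain rfl | hbx := eq_or_ne b x
  · exact (hxb ha hax).symm
  · exact contract_adj_of_notMem (by grind) (by grind) (hK (by grind) (by grind) hab)

theorem card_le_degree_contract [Fintype V] {v : V} {S : Finset V} (hx : x ∈ F) (hv : v ∉ F)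
    (hS : ∀ a ∈ S, G.Adj v a) (hSF : ∀ a ∈ S, a ∈ F → ∀ b ∈ S, b ∈ F → a = b) :
    S.card ≤ (contract G F x).degree v := by
  refine card_le_degree_of_injOn (f := collapse F x) ?_
    fun a ha => contract_adj_collapse hx hv (hS a ha)
  intro a ha b hb hab
  simp only [collapse] at hab
  grind

theorem hasTargetMinor_of_contract (hF : (G.induce F).Connected) (hx : x ∈ F)
    (h : HasTargetMinor (contract G F x)) : HasTargetMinor G := by
  refine hasTargetMinor_of_map (fun v hv => ?_) h
  obtain ⟨w, -, a, -, -, rfl, -⟩ := hv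
  by_cases ha : a ∈ F
  · have : collapse F x ⁻¹' {collapse F x a} = F := by
      ext b
      grind [collapse]
    rwa [this]
  · have : collapse F x ⁻¹' {collapse F x a} = {a} := by
      ext b
      grind [collapse]
    rw [this]
    exact connected_induce_singleton a

theorem ncard_edgeSet_contract_lt [Finite V] {y z : V} (hy : y ∈ F) (hz : z ∈ F)
    (hyz : G.Adj y z) : (contract G F x).edgeSet.ncard < G.edgeSet.ncard := by
  have hsub : (contract G F x).edgeSet ⊆ Sym2.map (collapse F x) '' (G.edgeSet \ {s(y, z)}) := by
    intro e
    induction e using Sym2.ind with | _ a b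
    rintro ⟨hne, a', b', hab, rfl, rfl⟩
    refine ⟨s(a', b'), ⟨hab, fun he => hne ?_⟩, rfl⟩
    obtain ⟨rfl, rfl⟩ | ⟨rfl, rfl⟩ := Sym2.eq_iff.1 he <;> simp [collapse_of_mem, hy, hz]
  calc (contract G F x).edgeSet.ncard
    _ ≤ (G.edgeSet \ {s(y, z)}).ncard :=
      (Set.ncard_le_ncard hsub (Set.toFinite _)).trans (Set.ncard_image_le (Set.toFinite _))
    _ < G.edgeSet.ncard := Set.ncard_sdiff_singleton_lt_of_mem hyz (Set.toFinite _)

end Contraction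

/-! ### Roots and critical graphs -/

variable {V : Type*} {G G' : SimpleGraph V}

/-- The hub `x` and rim `t₁ t₂ t₃ t₄` of a 4-wheel whose hub has no neighbours off the rim. -/
structure IsWheel (G : SimpleGraph V) (x t₁ t₂ t₃ t₄ : V) : Prop where
  adj_hub : ∀ y, G.Adj x y ↔ y = t₁ ∨ y = t₂ ∨ y = t₃ ∨ y = t₄
  ne₁₃ : t₁ ≠ t₃
  ne₂₄ : t₂ ≠ t₄
  adj₁₂ : G.Adj t₁ t₂
  adj₂₃ : G.Adj t₂ t₃
  adj₃₄ : G.Adj t₃ t₄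
  adj₄₁ : G.Adj t₄ t₁

/-- The vertex sets exempted from the degree condition in the strengthened theorem: cliques on at
most three vertices, and 4-wheels whose hub has degree 4. -/
def IsRoot (G : SimpleGraph V) (K : Finset V) : Prop :=
  (G.IsClique K ∧ K.card ≤ 3) ∨
    ∃ x t₁ t₂ t₃ t₄, K = {x, t₁, t₂, t₃, t₄} ∧ IsWheel G x t₁ t₂ t₃ t₄

theorem IsRoot.deleteEdge {K : Finset V} {t p : V} (hK : IsRoot G K) (hp : p ∉ K) :
    IsRoot (G.deleteEdges {s(t, p)}) K := by
  have hadj (a) (ha : a ∈ K) (b) (hb : b ∈ K) (hab : G.Adj a b) :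
      (G.deleteEdges {s(t, p)}).Adj a b :=
    deleteEdges_adj.2 ⟨hab, by grind⟩
  obtain ⟨hK, hcard⟩ | ⟨x, t₁, t₂, t₃, t₄, rfl, h⟩ := hK
  · exact .inl ⟨fun a ha b hb hab => hadj a ha b hb (hK ha hb hab), hcard⟩
  · refine .inr ⟨x, t₁, t₂, t₃, t₄, rfl, fun y => ?_, h.ne₁₃, h.ne₂₄,
      hadj _ (by simp) _ (by simp) h.adj₁₂, hadj _ (by simp) _ (by simp) h.adj₂₃,
      hadj _ (by simp) _ (by simp) h.adj₃₄, hadj _ (by simp) _ (by simp) h.adj₄₁⟩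
    rw [← h.adj_hub]
    exact ⟨fun hxy => (deleteEdges_adj.1 hxy).1, fun hxy =>
      hadj x (by simp) y (by simpa using Or.inr ((h.adj_hub y).1 hxy)) hxy⟩

variable [Fintype V] {K : Finset V}

/-- The hypothesis of the strengthened theorem: all vertices outside the root `K` have degree at
least 5. Isolated vertices are ignored, so that contractions can stay on the same vertex type. -/
structure IsRooted (G : SimpleGraph V) (K : Finset V) : Prop where
  isRoot : IsRoot G K
  five_le_degree : ∀ v ∈ G.support, v ∉ K → 5 ≤ G.degree v
  exists_notMem : ∃ v ∈ G.support, v ∉ K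

/-- `G` would be a counterexample to the strengthened theorem with the fewest edges, if it had a
root. -/
structure IsCritical (G : SimpleGraph V) : Prop where
  not_hasTargetMinor : ¬ HasTargetMinor G
  hasTargetMinor_of_lt : ∀ (G' : SimpleGraph V) (K : Finset V), IsRooted G' K →
    G'.edgeSet.ncard < G.edgeSet.ncard → HasTargetMinor G'

theorem hasTargetMinor_of_not_isCritical
    (h : ∀ (G : SimpleGraph V) (K : Finset V), IsRooted G K → ¬ IsCritical G)
    (hG : IsRooted G K) : HasTargetMinor G := by
  induction hn : G.edgeSet.ncard using Nat.strong_induction_on generalizing G K with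
  | _ n ih =>
    subst hn
    by_contra hnot
    exact h G K hG ⟨hnot, fun G' K' hG' hlt => ih _ hlt hG' rfl⟩

namespace IsCritical

variable {F D : Set V} {x u w : V} (hG : IsCritical G)

include hG

theorem not_isRooted_of_le_contract {y z : V} (hF : (G.induce F).Connected) (hx : x ∈ F)
    (hy : y ∈ F) (hz : z ∈ F) (hyz : G.Adj y z) (h : G' ≤ contract G F x) : ¬ IsRooted G' K :=
  fun hG' => hG.not_hasTargetMinor <| hasTargetMinor_of_contract hF hx <| .mono h <|
    hG.hasTargetMinor_of_lt G' K hG' <|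
      (Set.ncard_le_ncard (edgeSet_mono h) (Set.toFinite _)).trans_lt
        (ncard_edgeSet_contract_lt hy hz hyz)

/-- Contracting `F` to `x` and deleting everything off `D ∪ K` keeps the degrees in `D`. -/
theorem not_isRoot_of_contract (hF : (G.induce F).Connected) (hFnt : F.Nontrivial) (hx : x ∈ F)
    (hdeg : ∀ v ∈ G.support, v ∈ D → 5 ≤ G.degree v) (hD : ∃ v ∈ G.support, v ∈ D)
    (hDF : Disjoint D F) (hDK : Disjoint D K) (hKF : ∀ k ∈ K, k ∈ F → k = x)
    (hN : ∀ d ∈ D, ∀ v, G.Adj d v → v ∈ D ∨ v ∈ K) :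
    ¬ IsRoot ((contract G F x).induce (D ∪ K)).spanningCoe K := by
  intro hroot
  set G' := ((contract G F x).induce (D ∪ K)).spanningCoe
  have hle : G' ≤ contract G F x := spanningCoe_induce_le _ _
  have hkeep (d) (hd : d ∈ D) (v) (hdv : G.Adj d v) : G'.Adj d v := by
    have hdF := Set.disjoint_left.1 hDF hd
    have hmem : v ∈ D ∪ (K : Set V) := hN d hd v hdv
    have hadj : (contract G F x).Adj d v := by
      by_cases hv : v ∈ F
      · have hvK : v ∈ K := (hN d hd v hdv).resolve_left fun hvD =>
          Set.disjoint_left.1 hDF hvD hv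
        rw [hKF v hvK hv]
        exact (contract_adj_of_mem hx hv hdF hdv.symm).symm
      · exact contract_adj_of_notMem hdF hv hdv
    exact induce_spanningCoe_adj.2 ⟨hadj, .inl hd, hmem⟩
  have hnot : ¬ IsRooted G' K := by
    have : Nontrivial F := hFnt.coe_sort
    obtain ⟨z, hz⟩ := hF.preconnected.exists_adj_of_nontrivial ⟨x, hx⟩
    exact hG.not_isRooted_of_le_contract hF hx hx z.2 hz hle
  refine hnot ⟨hroot, ?_, ?_⟩
  · rintro v ⟨w, hvw⟩ hvK
    have hvD : v ∈ D := (induce_spanningCoe_adj.1 hvw).2.1.resolve_right hvK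
    have hvx : v ≠ x := (ne_of_mem_of_not_mem hx (Set.disjoint_left.1 hDF hvD)).symm
    have hv : v ∈ G.support := (notMem_of_contract_adj hvx (hle hvw)).2
    exact (hdeg v hv hvD).trans (by convert degree_le_degree_of_adj_imp (hkeep v hvD))
  · obtain ⟨v, ⟨w, hvw⟩, hvD⟩ := hD
    exact ⟨v, ⟨w, hkeep v hvD w hvw⟩, Set.disjoint_left.1 hDK hvD⟩

theorem exists_common_neighbor_of_isRoot_contract (hK : IsRooted G K) {K' : Finset V}
    (huw : G.Adj u w) (hKK' : K ⊆ insert w K') (hu : u ∈ K')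
    (hroot : IsRoot (contract G {u, w} u) K') (hne : ∃ y ∈ G.support, y ∉ insert w K') :
    ∃ v ∉ K', G.Adj u v ∧ G.Adj w v ∧ G.degree v = 5 := by
  by_contra! hcon
  refine hG.not_isRooted_of_le_contract (K := K') (induce_pair_connected_of_adj huw) (x := u)
    (y := u) (z := w) (by simp) (by simp) (by simp) huw le_rfl ⟨hroot, ?_, ?_⟩
  · rintro v ⟨y, hvy⟩ hv
    obtain ⟨hvF, hvsupp⟩ := notMem_of_contract_adj (by grind) hvy
    have h5 : 5 ≤ G.degree v := hK.five_le_degree v hvsupp (by grind)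
    by_cases hboth : G.Adj u v ∧ G.Adj w v
    · have h6 : 5 ≤ ((G.neighborFinset v).erase w).card := by
        have := hcon v hv hboth.1 hboth.2
        rw [Finset.card_erase_of_mem (by simpa using hboth.2.symm), card_neighborFinset_eq_degree]
        lia
      exact h6.trans (card_le_degree_contract (by simp) hvF (by simp) (by grind))
    · rw [← card_neighborFinset_eq_degree] at h5
      refine h5.trans (card_le_degree_contract (by simp) hvF (by simp) ?_)
      simp only [mem_neighborFinset, Set.mem_insert_iff, Set.mem_singleton_iff]
      grind [G.adj_comm u v, G.adj_comm w v]
  · obtain ⟨y, ⟨b, hyb⟩, hy⟩ := hne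
    exact ⟨y, ⟨_, contract_adj_collapse (by simp) (by grind) hyb⟩, by grind⟩

theorem exists_common_neighbor_of_contract (hK : IsRooted G K) {K' : Finset V}
    (huw : G.Adj u w) (hKK' : K ⊆ insert w K') (hu : u ∈ K') (hw : w ∉ K') (hcard : K'.card ≤ 3)
    (hclique : G.IsClique (K'.erase u : Finset V))
    (hadj : ∀ b ∈ K', b ≠ u → G.Adj u b ∨ G.Adj w b) :
    ∃ v ∉ K', G.Adj u v ∧ G.Adj w v ∧ G.degree v = 5 := by
  refine hG.exists_common_neighbor_of_isRoot_contract hK huw hKK' hu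
    (.inl ⟨isClique_contract (by simp) (by grind) hclique (by simpa using hadj), hcard⟩) ?_
  obtain ⟨v, hv, hvK⟩ := hK.exists_notMem
  have hlt : (insert w K').card < G.degree v :=
    ((Finset.card_insert_le w K').trans (Nat.succ_le_succ hcard)).trans_lt
      (hK.five_le_degree v hv hvK)
  obtain ⟨y, hvy, hy⟩ := exists_adj_notMem_of_card_lt_degree hlt
  exact ⟨y, ⟨v, hvy.symm⟩, hy⟩

theorem not_isRoot_deleteEdge (hK : IsRooted G K) (huw : G.Adj u w) (hu : u ∈ K ∨ 6 ≤ G.degree u)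
    (hw : w ∈ K ∨ 6 ≤ G.degree w) : ¬ IsRoot (G.deleteEdges {s(u, w)}) K := by
  intro hroot
  obtain ⟨G', hG'⟩ : ∃ G', G' = G.deleteEdges {s(u, w)} := ⟨_, rfl⟩
  have hlt : G'.edgeSet.ncard < G.edgeSet.ncard := by
    rw [hG', edgeSet_deleteEdges]
    exact Set.ncard_sdiff_singleton_lt_of_mem huw (Set.toFinite _)
  have hdeg (v) (hv : v ∈ G.support) (hvK : v ∉ K) : 5 ≤ G'.degree v := by
    have hkeep {S : Finset V} (hS : ∀ a ∈ S, G.Adj v a ∧ s(v, a) ≠ s(u, w)) :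
        S.card ≤ G'.degree v :=
      card_le_degree fun a ha => by rw [hG']; exact deleteEdges_adj.2 (hS a ha)
    by_cases hvuw : v = u ∨ v = w
    · have h6 : 6 ≤ G.degree v := by grind
      have : 5 ≤ ((G.neighborFinset v).erase (if v = u then w else u)).card := by
        have := Finset.pred_card_le_card_erase (s := G.neighborFinset v)
          (a := if v = u then w else u)
        rw [card_neighborFinset_eq_degree] at this
        lia
      exact this.trans (hkeep (by grind [mem_neighborFinset, Sym2.eq_iff, huw.ne]))
    · refine (hK.five_le_degree v hv hvK).trans ?_
      rw [← card_neighborFinset_eq_degree]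
      exact hkeep (by grind [mem_neighborFinset, Sym2.eq_iff])
  have hrooted : IsRooted G' K := by
    refine ⟨hG' ▸ hroot, fun v hv => hdeg v (support_mono ?_ hv), ?_⟩
    · rw [hG']
      exact deleteEdges_le _
    · obtain ⟨v, hv, hvK⟩ := hK.exists_notMem
      exact ⟨v, (degree_pos_iff_exists_adj _ _).1 (by have := hdeg v hv hvK; lia), hvK⟩
  exact hG.not_hasTargetMinor (.mono (hG' ▸ deleteEdges_le _)
    (hG.hasTargetMinor_of_lt G' K hrooted hlt))

theorem degree_eq_five_of_adj_root (hK : IsRooted G K) {t p : V} (ht : t ∈ K) (hp : p ∉ K)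
    (htp : G.Adj t p) : G.degree p = 5 := by
  by_contra hne
  have h5 := hK.five_le_degree p ⟨t, htp.symm⟩ hp
  exact hG.not_isRoot_deleteEdge hK htp (.inl ht) (.inr (by lia)) (hK.isRoot.deleteEdge hp)

end IsCritical

end

/-! ### Small separators in a critical graph -/

section

variable {V : Type*} [Fintype V] {G : SimpleGraph V} {K P : Finset V} {F D : Set V}

/-- The vertex set `D`, of minimum degree at least 5 in `G`, is separated from `F` by `P`. -/
structure IsFarSide (G : SimpleGraph V) (F : Set V) (P : Finset V) (D : Set V) : Prop where
  disjoint_near : Disjoint D F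
  disjoint_separator : Disjoint D P
  five_le_degree : ∀ v ∈ G.support, v ∈ D → 5 ≤ G.degree v
  exists_mem : ∃ v ∈ G.support, v ∈ D
  mem_or_mem_of_adj : ∀ d ∈ D, ∀ v, G.Adj d v → v ∈ D ∨ v ∈ P

theorem IsRooted.isFarSide (hK : IsRooted G K) (hKF : ∀ k ∈ K, k ∈ F ∨ k ∈ P)
    (hN : ∀ f ∈ F, ∀ v, G.Adj f v → v ∈ F ∨ v ∈ P) (hout : ∃ v ∈ G.support, v ∉ F ∧ v ∉ P) :
    IsFarSide G F P {v | v ∉ F ∧ v ∉ P} where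
  disjoint_near := Set.disjoint_left.2 fun _ h => h.1
  disjoint_separator := Set.disjoint_left.2 fun _ h => h.2
  five_le_degree v hv hvD := hK.five_le_degree v hv fun hvK => (hKF v hvK).elim hvD.1 hvD.2
  exists_mem := hout
  mem_or_mem_of_adj d hd v hdv := by
    by_cases hvF : v ∈ F
    · exact absurd (hN v hvF d hdv.symm) (not_or.2 hd)
    · exact or_iff_not_imp_right.2 fun hvP => ⟨hvF, hvP⟩

namespace IsCritical

variable {p p₁ p₂ p₃ p₄ : V} (hG : IsCritical G)

include hG

theorem not_isFarSide_of_isClique (hF : (G.induce F).Connected) (hFP : Disjoint F P) (hp : p ∈ P)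
    (hcard : P.card ≤ 3) (hclique : G.IsClique (P.erase p : Finset V))
    (hPF : ∀ q ∈ P, ∃ f ∈ F, G.Adj f q) : ¬ IsFarSide G F P D := by
  intro hD
  obtain ⟨f, hf, hfp⟩ := hPF p hp
  have hpF : ∀ k ∈ P, k ∈ insert p F → k = p := fun k hk hkF =>
    hkF.resolve_right fun h => Set.disjoint_left.1 hFP h hk
  refine hG.not_isRoot_of_contract (D := D) (connected_induce_insert hF hf hfp.symm)
    ⟨p, Set.mem_insert p F, f, Set.mem_insert_of_mem p hf, hfp.ne'⟩ (Set.mem_insert p F)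
    hD.five_le_degree hD.exists_mem ?_ hD.disjoint_separator hpF hD.mem_or_mem_of_adj
    (.inl ⟨?_, hcard⟩)
  · rw [Set.disjoint_insert_right]
    exact ⟨fun h => Set.disjoint_left.1 hD.disjoint_separator h hp, hD.disjoint_near⟩
  · have := isClique_contract (Set.mem_insert p F) hpF hclique fun b hb _ => by
      obtain ⟨f, hf, hfb⟩ := hPF b hb
      exact ⟨f, Set.mem_insert_of_mem p hf, hfb⟩
    intro a ha b hb hab
    simpa [this ha hb hab] using ⟨Or.inr ha, Or.inr hb⟩

theorem not_isFarSide_of_cycle (hF : (G.induce F).Connected) (hFnt : F.Nontrivial)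
    (hPF : ∀ q ∈ [p₁, p₂, p₃, p₄], q ∉ F ∧ ∃ f ∈ F, G.Adj f q) (h₁₃ : p₁ ≠ p₃) (h₂₄ : p₂ ≠ p₄)
    (h₁₂ : G.Adj p₁ p₂) (h₂₃ : G.Adj p₂ p₃) (h₃₄ : G.Adj p₃ p₄) (h₄₁ : G.Adj p₄ p₁) :
    ¬ IsFarSide G F {p₁, p₂, p₃, p₄} D := by
  intro hD
  obtain ⟨x, hx⟩ := hFnt.nonempty
  have hrim {q} (hq : q ∈ ({p₁, p₂, p₃, p₄} : Finset V)) : q ∉ F ∧ (contract G F x).Adj x q := by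
    obtain ⟨hqF, f, hf, hfq⟩ := hPF q (by simpa using hq)
    exact ⟨hqF, contract_adj_of_mem hx hf hqF hfq⟩
  have hkeep {a b} (ha : a ∈ ({p₁, p₂, p₃, p₄} : Finset V))
      (hb : b ∈ ({p₁, p₂, p₃, p₄} : Finset V)) (hab : G.Adj a b) :
      ((contract G F x).induce (D ∪ ({x, p₁, p₂, p₃, p₄} : Finset V))).spanningCoe.Adj a b := by
    have := contract_adj_of_notMem (x := x) (hrim ha).1 (hrim hb).1 hab
    exact induce_spanningCoe_adj.2 ⟨this, .inr (by simp_all), .inr (by simp_all)⟩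
  have hxD : x ∉ D := fun h => Set.disjoint_left.1 hD.disjoint_near h hx
  refine hG.not_isRoot_of_contract (D := D) (K := {x, p₁, p₂, p₃, p₄}) hF hFnt hx
    hD.five_le_degree hD.exists_mem hD.disjoint_near ?_ ?_ ?_
    (.inr ⟨x, p₁, p₂, p₃, p₄, rfl, ?_, h₁₃, h₂₄, ?_, ?_, ?_, ?_⟩)
  · have := hD.disjoint_separator
    rw [Finset.coe_insert, Set.disjoint_insert_right]
    exact ⟨hxD, this⟩
  · grind
  · intro d hd v hdv
    have := hD.mem_or_mem_of_adj d hd v hdv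
    grind
  · intro y
    have hxy {q} (hq : q ∈ ({p₁, p₂, p₃, p₄} : Finset V)) :
        ((contract G F x).induce (D ∪ ({x, p₁, p₂, p₃, p₄} : Finset V))).spanningCoe.Adj x q :=
      induce_spanningCoe_adj.2 ⟨(hrim hq).2, .inr (by simp), .inr (by simp_all)⟩
    refine ⟨fun h => ?_, fun h => hxy (by simpa using h)⟩
    obtain ⟨hadj, -, hy⟩ := induce_spanningCoe_adj.1 h
    obtain hyD | hy := hy
    · obtain ⟨f, hf, hfy⟩ := exists_adj_of_contract_adj hx hadj
      rcases hD.mem_or_mem_of_adj y hyD f hfy.symm with hfD | hfP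
      · exact absurd hf (Set.disjoint_left.1 hD.disjoint_near hfD)
      · exact absurd hf (hrim hfP).1
    · simpa [hadj.ne'] using hy
  exacts [hkeep (by simp) (by simp) h₁₂, hkeep (by simp) (by simp) h₂₃,
    hkeep (by simp) (by simp) h₃₄, hkeep (by simp) (by simp) h₄₁]

theorem mem_or_mem_of_isClique (hK : IsRooted G K) (hKF : ∀ k ∈ K, k ∈ F ∨ k ∈ P)
    (hN : ∀ f ∈ F, ∀ v, G.Adj f v → v ∈ F ∨ v ∈ P) (hF : (G.induce F).Connected)
    (hFP : Disjoint F P) (hp : p ∈ P) (hcard : P.card ≤ 3)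
    (hclique : G.IsClique (P.erase p : Finset V)) (hPF : ∀ q ∈ P, ∃ f ∈ F, G.Adj f q) :
    ∀ v ∈ G.support, v ∈ F ∨ v ∈ P := by
  by_contra! hout
  exact hG.not_isFarSide_of_isClique hF hFP hp hcard hclique hPF (hK.isFarSide hKF hN hout)

theorem mem_or_mem_of_cycle (hK : IsRooted G K) (hKF : ∀ k ∈ K, k ∈ F)
    (hN : ∀ f ∈ F, ∀ v, G.Adj f v → v ∈ F ∨ v ∈ ({p₁, p₂, p₃, p₄} : Finset V))
    (hF : (G.induce F).Connected) (hFnt : F.Nontrivial)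
    (hPF : ∀ q ∈ [p₁, p₂, p₃, p₄], q ∉ F ∧ ∃ f ∈ F, G.Adj f q) (h₁₃ : p₁ ≠ p₃) (h₂₄ : p₂ ≠ p₄)
    (h₁₂ : G.Adj p₁ p₂) (h₂₃ : G.Adj p₂ p₃) (h₃₄ : G.Adj p₃ p₄) (h₄₁ : G.Adj p₄ p₁) :
    ∀ v ∈ G.support, v ∈ F ∨ v ∈ ({p₁, p₂, p₃, p₄} : Finset V) := by
  by_contra! hout
  exact hG.not_isFarSide_of_cycle hF hFnt hPF h₁₃ h₂₄ h₁₂ h₂₃ h₃₄ h₄₁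
    (hK.isFarSide (fun k hk => .inl (hKF k hk)) hN hout)

end IsCritical

end

/-! ### Roots that are 4-wheels -/

section

variable {V : Type*} [Fintype V] {G : SimpleGraph V} {x t₁ t₂ t₃ t₄ p : V}

/-- A critical graph rooted at a 4-wheel. -/
structure IsCriticalWheel (G : SimpleGraph V) (x t₁ t₂ t₃ t₄ : V) : Prop
    extends IsWheel G x t₁ t₂ t₃ t₄ where
  isCritical : IsCritical G
  isRooted : IsRooted G {x, t₁, t₂, t₃, t₄}

/-- `p` lies off the wheel with hub `x` and rim `t₁ t₂ t₃ t₄`. -/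
abbrev IsOuter (x t₁ t₂ t₃ t₄ p : V) : Prop := p ≠ x ∧ p ≠ t₁ ∧ p ≠ t₂ ∧ p ≠ t₃ ∧ p ≠ t₄

omit [Fintype V] in
theorem isOuter_iff_notMem :
    IsOuter x t₁ t₂ t₃ t₄ p ↔ p ∉ ({x, t₁, t₂, t₃, t₄} : Finset V) := by
  simp [IsOuter]

namespace IsCriticalWheel

variable (hG : IsCriticalWheel G x t₁ t₂ t₃ t₄)

include hG

theorem rotate : IsCriticalWheel G x t₂ t₃ t₄ t₁ where
  adj_hub y := by rw [hG.adj_hub]; tauto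
  ne₁₃ := hG.ne₂₄
  ne₂₄ := hG.ne₁₃.symm
  adj₁₂ := hG.adj₂₃
  adj₂₃ := hG.adj₃₄
  adj₃₄ := hG.adj₄₁
  adj₄₁ := hG.adj₁₂
  isCritical := hG.isCritical
  isRooted := by
    convert hG.isRooted using 1
    grind

theorem adj_hub₁ : G.Adj x t₁ := (hG.adj_hub t₁).2 (.inl rfl)

theorem nodup : [x, t₁, t₂, t₃, t₄].Nodup := by
  have h₁ := hG.adj_hub₁.ne
  have h₂ := hG.rotate.adj_hub₁.ne
  have h₃ := hG.rotate.rotate.adj_hub₁.ne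
  have h₄ := hG.rotate.rotate.rotate.adj_hub₁.ne
  simp [h₁, h₂, h₃, h₄, hG.adj₁₂.ne, hG.adj₂₃.ne, hG.adj₃₄.ne, hG.adj₄₁.ne', hG.ne₁₃, hG.ne₂₄]

theorem degree_eq_five (hp : IsOuter x t₁ t₂ t₃ t₄ p) (htp : G.Adj t₁ p) :
    G.degree p = 5 :=
  hG.isCritical.degree_eq_five_of_adj_root hG.isRooted (by simp)
    (isOuter_iff_notMem.1 hp) htp

theorem isWheel_contract (hp : IsOuter x t₁ t₂ t₃ t₄ p) :
    IsWheel (contract G {t₁, p} t₁) x t₁ t₂ t₃ t₄ := by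
  have hnd := hG.nodup
  have hx : x ∉ ({t₁, p} : Set V) := by grind
  have ht₂ : t₂ ∉ ({t₁, p} : Set V) := by grind
  have ht₃ : t₃ ∉ ({t₁, p} : Set V) := by grind
  have ht₄ : t₄ ∉ ({t₁, p} : Set V) := by grind
  have ht₁ : t₁ ∈ ({t₁, p} : Set V) := Set.mem_insert t₁ _
  refine ⟨fun y => ⟨?_, ?_⟩, hG.ne₁₃, hG.ne₂₄, contract_adj_of_mem ht₁ ht₁ ht₂ hG.adj₁₂,
    contract_adj_of_notMem ht₂ ht₃ hG.adj₂₃, contract_adj_of_notMem ht₃ ht₄ hG.adj₃₄,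
    (contract_adj_of_mem ht₁ ht₁ ht₄ hG.adj₄₁.symm).symm⟩
  · rintro ⟨-, a, b, hab, ha, rfl⟩
    obtain rfl : a = x := by grind [collapse]
    have := (hG.adj_hub b).1 hab
    grind [collapse]
  · intro hy
    have := contract_adj_collapse ht₁ hx ((hG.adj_hub y).2 hy)
    grind [collapse]

theorem exists_common_neighbor (hp : IsOuter x t₁ t₂ t₃ t₄ p) (htp : G.Adj t₁ p) :
    ∃ q, IsOuter x t₁ t₂ t₃ t₄ q ∧ G.Adj t₁ q ∧ G.Adj p q := by
  obtain ⟨q, hq, htq, hpq, -⟩ :=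
    hG.isCritical.exists_common_neighbor_of_isRoot_contract hG.isRooted htp
      (Finset.subset_insert _ _) (by simp)
      (.inr ⟨x, t₁, t₂, t₃, t₄, rfl, hG.isWheel_contract hp⟩) <| by
        obtain ⟨y, hpy, hy⟩ := exists_adj_ne_four (hG.degree_eq_five hp htp).ge t₁ t₂ t₃ t₄
        have := hG.adj_hub p
        refine ⟨y, ⟨p, hpy.symm⟩, ?_⟩
        grind [hpy.ne, hpy.symm]
  exact ⟨q, isOuter_iff_notMem.2 hq, htq, hpq⟩

theorem exists_outer_neighbor : ∃ p, IsOuter x t₁ t₂ t₃ t₄ p ∧ G.Adj t₁ p := by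
  by_contra! hN
  have hnd := hG.nodup
  obtain ⟨v, hv, hvK⟩ := hG.isRooted.exists_notMem
  have hall := hG.isCritical.mem_or_mem_of_isClique hG.isRooted (F := {x, t₁})
    (P := {t₂, t₃, t₄}) (p := t₂) (by simp) ?_ (induce_pair_connected_of_adj hG.adj_hub₁)
    (by grind) (by simp) Finset.card_le_three
    (isClique_erase_of_adj hG.adj₃₄) ?_ v hv
  · grind
  · have := hG.adj_hub
    grind
  · exact fun q hq => ⟨x, by simp, (hG.adj_hub q).2 (by simp_all)⟩

theorem five_le_degree_rim : 5 ≤ G.degree t₁ := by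
  obtain ⟨p, hp, htp⟩ := hG.exists_outer_neighbor
  obtain ⟨q, hq, htq, hpq⟩ := hG.exists_common_neighbor hp htp
  have := hG.nodup
  refine length_le_degree (l := [x, t₂, t₄, p, q]) (by grind [hpq.ne]) ?_
  simp [hG.adj_hub₁.symm, hG.adj₁₂, hG.adj₄₁.symm, htp, htq]

theorem degree_rim : G.degree t₁ = 5 := by
  have h₁ := hG.five_le_degree_rim
  have h₂ := hG.rotate.five_le_degree_rim
  have h₃ := hG.rotate.rotate.five_le_degree_rim
  have h₄ := hG.rotate.rotate.rotate.five_le_degree_rim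
  have hx : IsRooted G {x} := by
    refine ⟨.inl ⟨by simp, by simp⟩, fun v hv hvx => ?_, t₁, ⟨x, hG.adj_hub₁.symm⟩, ?_⟩
    · have := hG.isRooted.five_le_degree v hv
      grind
    · simpa using hG.adj_hub₁.ne'
  exact hG.isCritical.degree_eq_five_of_adj_root hx (by simp) (by simpa using hG.adj_hub₁.ne')
    hG.adj_hub₁

theorem exists_adj_rim_iff (hp : IsOuter x t₁ t₂ t₃ t₄ p) (htp : G.Adj t₁ p) :
    ∃ q, IsOuter x t₁ t₂ t₃ t₄ q ∧ G.Adj p q ∧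
      ∀ v, G.Adj t₁ v ↔ v = x ∨ v = t₂ ∨ v = t₄ ∨ v = p ∨ v = q := by
  obtain ⟨q, hq, htq, hpq⟩ := hG.exists_common_neighbor hp htp
  have := hG.nodup
  refine ⟨q, hq, hpq, fun v => ?_⟩
  simpa using adj_iff_mem_of_degree_le_length (l := [x, t₂, t₄, p, q]) (by grind [hpq.ne])
    (by simp [hG.adj_hub₁.symm, hG.adj₁₂, hG.adj₄₁.symm, htp, htq])
    (by simp [hG.degree_rim]) v

theorem exists_common_outer_neighbor :
    ∃ p, IsOuter x t₁ t₂ t₃ t₄ p ∧ G.Adj t₁ p ∧ G.Adj t₂ p := by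
  by_contra! hcon
  have hnd := hG.nodup
  have ht₁ : t₁ ∈ ({x, t₁, t₂} : Set V) := by simp
  refine hG.isCritical.not_isRooted_of_le_contract (K := {t₁, t₃, t₄}) (F := {x, t₁, t₂})
    (x := t₁) (y := x) (z := t₁) ?_ ht₁ (by simp) ht₁ hG.adj_hub₁ le_rfl ⟨.inl ⟨?_, ?_⟩, ?_, ?_⟩
  · have := hG.adj_hub
    exact connected_induce_of_forall_adj (x := x) (by simp) (by grind)
  · have := hG.adj₂₃
    have := hG.adj₄₁.symm
    exact isClique_contract ht₁ (by grind) (isClique_erase_of_adj hG.adj₃₄) (by grind)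
  · exact Finset.card_le_three
  · rintro v ⟨w, hvw⟩ hv
    obtain ⟨hvF, hvsupp⟩ := notMem_of_contract_adj (by grind) hvw
    have hvK : IsOuter x t₁ t₂ t₃ t₄ v := by grind
    have h5 := hG.isRooted.five_le_degree v hvsupp (isOuter_iff_notMem.1 hvK)
    rw [← card_neighborFinset_eq_degree] at h5
    refine h5.trans (card_le_degree_contract ht₁ hvF (by simp) ?_)
    have := hG.adj_hub v
    have := hcon v hvK
    simp only [mem_neighborFinset, Set.mem_insert_iff, Set.mem_singleton_iff, G.adj_comm v]
    grind
  · obtain ⟨v, ⟨w, hvw⟩, hv⟩ := hG.isRooted.exists_notMem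
    exact ⟨v, ⟨_, contract_adj_collapse ht₁ (by grind) hvw⟩, by grind⟩

theorem not_adj_all (hp : IsOuter x t₁ t₂ t₃ t₄ p) (h₁ : G.Adj t₁ p)
    (h₂ : G.Adj t₂ p) (h₃ : G.Adj t₃ p) : ¬ G.Adj t₄ p := by
  intro h₄
  obtain ⟨q, hq, hpq, hN₁⟩ := hG.exists_adj_rim_iff hp h₁
  have hnd := hG.nodup
  have hNp : ∀ v, G.Adj p v ↔ v ∈ [t₁, t₂, t₃, t₄, q] :=
    adj_iff_mem_of_degree_le_length (by grind)
      (by simp [h₁.symm, h₂.symm, h₃.symm, h₄.symm, hpq]) (by simp [hG.degree_eq_five hp h₁])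
  have huniq {r} (hr : IsOuter x t₁ t₂ t₃ t₄ r) (hpr : G.Adj p r) : r = q := by
    have := (hNp r).1 hpr
    simp_all
  obtain ⟨r, hr, hpr, hN₂⟩ := hG.rotate.exists_adj_rim_iff (by grind) h₂
  obtain rfl := huniq (by grind) hpr
  obtain ⟨r, hr, hpr, hN₃⟩ := hG.rotate.rotate.exists_adj_rim_iff (by grind) h₃
  obtain rfl := huniq (by grind) hpr
  obtain ⟨r, hr, hpr, hN₄⟩ := hG.rotate.rotate.rotate.exists_adj_rim_iff (by grind) h₄
  obtain rfl := huniq (by grind) hpr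
  refine hG.isCritical.not_hasTargetMinor (.inl (hasMinor_K6minus_of_branchSets (A := {t₂})
    (B := {t₄}) (C := {t₃}) (D := {p}) (E := {r}) (F := {x, t₁}) ?_ ?_ ?_ ?_ ?_))
  · simp [induce_pair_connected_of_adj hG.adj_hub₁]
  · clear * - hnd hp hq hpq
    have := hpq.ne
    simp only [List.pairwise_cons, List.mem_cons, List.not_mem_nil, or_false,
      Set.disjoint_singleton_left, forall_eq_or_imp, Set.mem_singleton_iff, forall_eq,
      Set.mem_insert_iff, not_or, Set.disjoint_insert_left, IsEmpty.forall_iff, implies_true,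
      List.Pairwise.nil, and_self, and_true]
    grind
  · simp [Linked, hN₂]
  · simp [Linked, hN₄]
  · simp [Linked, hN₃, hpq, h₁.symm, G.adj_comm _ t₁, hN₁]

theorem outer_neighbors {q : V} (hp : IsOuter x t₁ t₂ t₃ t₄ p)
    (hq : IsOuter x t₁ t₂ t₃ t₄ q) (hpq : p ≠ q) (htp : G.Adj t₁ p)
    (htq : G.Adj t₁ q) :
    G.Adj p q ∧ ∀ v, IsOuter x t₁ t₂ t₃ t₄ v → G.Adj t₁ v → v = p ∨ v = q := by
  obtain ⟨r, -, hpr, hN⟩ := hG.exists_adj_rim_iff hp htp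
  obtain rfl : q = r := by grind
  exact ⟨hpr, fun v hv htv => by grind⟩

theorem mem_of_outer_neighbors_subset {a b c d : V}
    (h₂a : G.Adj t₂ a) (hab : G.Adj a b) (hac : G.Adj a c) (h₄d : G.Adj t₄ d) (hcd : G.Adj c d)
    (hb : IsOuter x t₁ t₂ t₃ t₄ b) (hc : IsOuter x t₁ t₂ t₃ t₄ c)
    (hd : IsOuter x t₁ t₂ t₃ t₄ d) (had : a ≠ d)
    (hN : ∀ f v, f = t₁ ∨ f = t₂ ∨ f = t₃ ∨ f = t₄ ∨ f = a → IsOuter x t₁ t₂ t₃ t₄ v → G.Adj f v →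
      v = a ∨ v = b ∨ v = c ∨ v = d) :
    ∀ v ∈ G.support, IsOuter x t₁ t₂ t₃ t₄ v → v = a ∨ v = b ∨ v = c ∨ v = d := by
  intro v hv hvK
  have hadj := hG.adj_hub
  have := hG.isCritical.mem_or_mem_of_isClique hG.isRooted (F := {a, x, t₁, t₂, t₃, t₄})
    (P := {b, c, d}) (p := b) (by simp) ?_ ?_ ?_ (by simp) Finset.card_le_three
    (isClique_erase_of_adj hcd) ?_ v hv
  · grind
  · intro f hf v hfv
    by_cases hvK : v ∈ ({x, t₁, t₂, t₃, t₄} : Finset V)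
    · left; simp_all
    · have := hadj v
      have := hN f
      grind
  · refine connected_induce_insert (connected_induce_of_forall_adj (x := x) (by simp) ?_)
      (b := t₂) (by simp) h₂a.symm
    exact fun y hy hyx => (hadj y).2 (by simpa [hyx] using hy)
  · have := hab.ne
    have := hac.ne
    simp only [Finset.coe_insert, Finset.coe_singleton, Set.disjoint_insert_right,
      Set.mem_insert_iff, Set.mem_singleton_iff, not_or, Set.disjoint_singleton_right]
    grind
  · simp only [Finset.mem_insert, Finset.mem_singleton, forall_eq_or_imp, forall_eq]
    exact ⟨⟨a, by simp, hab⟩, ⟨a, by simp, hac⟩, ⟨t₄, by simp, h₄d⟩⟩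

theorem eq_of_adj_outer {a b c d r v : V} (hr : IsOuter x t₁ t₂ t₃ t₄ r)
    (hmem : ∀ v ∈ G.support, IsOuter x t₁ t₂ t₃ t₄ v → v = a ∨ v = b ∨ v = c ∨ v = d)
    (hrv : G.Adj r v) :
    (v = t₁ ∧ G.Adj t₁ r ∨ v = t₂ ∧ G.Adj t₂ r ∨ v = t₃ ∧ G.Adj t₃ r ∨ v = t₄ ∧ G.Adj t₄ r ∨
      v = a ∨ v = b ∨ v = c ∨ v = d) ∧ v ≠ r := by
  have := (hG.adj_hub r).1
  have := hmem v ⟨r, hrv.symm⟩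
  grind [hrv.symm, hrv.ne]

theorem exists_outer_notMem {a b c d e : V} (hb : IsOuter x t₁ t₂ t₃ t₄ b)
    (hc : IsOuter x t₁ t₂ t₃ t₄ c) (he : IsOuter x t₁ t₂ t₃ t₄ e)
    (h₂b : G.Adj t₂ b) (h₃c : G.Adj t₃ c) (h₁e : G.Adj t₁ e) (hed : e = c ∨ e = d)
    (hbce : b = c → e ≠ c) (hab : a ≠ b) (hac : a ≠ c) (hae : a ≠ e)
    (hN₁ : ∀ v, IsOuter x t₁ t₂ t₃ t₄ v → G.Adj t₁ v → v = a ∨ v = e)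
    (hN₂ : ∀ v, IsOuter x t₁ t₂ t₃ t₄ v → G.Adj t₂ v → v = a ∨ v = b)
    (hN₃ : ∀ v, IsOuter x t₁ t₂ t₃ t₄ v → G.Adj t₃ v → v = a ∨ v = c)
    (hN₄ : ∀ v, IsOuter x t₁ t₂ t₃ t₄ v → G.Adj t₄ v → v = c ∨ v = d) :
    ∃ v ∈ G.support, IsOuter x t₁ t₂ t₃ t₄ v ∧ v ≠ a ∧ v ≠ b ∧ v ≠ c ∧ v ≠ d := by
  by_contra! hN
  have hmem : ∀ v ∈ G.support, IsOuter x t₁ t₂ t₃ t₄ v → v = a ∨ v = b ∨ v = c ∨ v = d := by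
    grind
  by_cases hbc : b = c
  · obtain ⟨v, hev, hv⟩ := exists_adj_ne_four (hG.degree_eq_five he h₁e).ge t₁ t₄ a c
    have hv' := hG.eq_of_adj_outer he hmem hev
    have h₂e := hN₂ e he
    have h₃e := hN₃ e he
    clear * - hv hv' h₂e h₃e hbc hbce hed hac hae
    grind
  by_cases hbd : b = d
  · obtain rfl | rfl := hed
    · obtain ⟨v, hbv, hv⟩ :=
        exists_adj_ne_four (hG.rotate.degree_eq_five (by grind) h₂b).ge t₂ t₄ a e
      have hv' := hG.eq_of_adj_outer hb hmem hbv
      have h₁b := hN₁ b hb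
      have h₃b := hN₃ b hb
      clear * - hv hv' h₁b h₃b hbc hbd hab
      grind
    · obtain ⟨v, hcv, hv⟩ :=
        exists_adj_ne_four (hG.rotate.rotate.degree_eq_five (by grind) h₃c).ge t₃ t₄ a b
      have hv' := hG.eq_of_adj_outer hc hmem hcv
      have h₁c := hN₁ c hc
      have h₂c := hN₂ c hc
      clear * - hv hv' h₁c h₂c hbc hbd hac
      grind
  · obtain ⟨v, hbv, hv⟩ :=
      exists_adj_ne_four (hG.rotate.degree_eq_five (by grind) h₂b).ge t₂ a c d
    have hv' := hG.eq_of_adj_outer hb hmem hbv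
    have h₁b := hN₁ b hb
    have h₃b := hN₃ b hb
    have h₄b := hN₄ b hb
    clear * - hv hv' h₁b h₃b h₄b hbc hbd hab hed
    grind

theorem outer_neighbors_of_adj_three {a b c d e : V} (ha : IsOuter x t₁ t₂ t₃ t₄ a)
    (h₁ : G.Adj t₁ a) (h₂ : G.Adj t₂ a) (h₃ : G.Adj t₃ a) (hb : IsOuter x t₁ t₂ t₃ t₄ b)
    (hc : IsOuter x t₁ t₂ t₃ t₄ c) (he : IsOuter x t₁ t₂ t₃ t₄ e) (hab : G.Adj a b)
    (hac : G.Adj a c) (hae : G.Adj a e) (hed : e = c ∨ e = d) (hbce : b = c → e ≠ c) :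
    ∀ v, IsOuter x t₁ t₂ t₃ t₄ v → G.Adj a v → v = b ∨ v = c ∨ v = d := by
  have hnd := hG.nodup
  have h5 : G.degree a ≤ 5 := (hG.degree_eq_five ha h₁).le
  by_cases hbc : b = c
  · have := adj_iff_mem_of_degree_le_length (l := [t₁, t₂, t₃, b, e])
      (by grind) (by simp [h₁.symm, h₂.symm, h₃.symm, hab, hae]) h5
    clear * - this hbc hed
    simp only [List.mem_cons, List.not_mem_nil, or_false] at this
    grind
  · have := adj_iff_mem_of_degree_le_length (l := [t₁, t₂, t₃, b, c])
      (by grind) (by simp [h₁.symm, h₂.symm, h₃.symm, hab, hac]) h5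
    clear * - this
    simp only [List.mem_cons, List.not_mem_nil, or_false] at this
    grind

theorem not_adj_three {a : V} (ha : IsOuter x t₁ t₂ t₃ t₄ a) (h₁ : G.Adj t₁ a)
    (h₂ : G.Adj t₂ a) : ¬ G.Adj t₃ a := by
  intro h₃
  have h₄ := hG.not_adj_all ha h₁ h₂ h₃
  obtain ⟨b, hb, h₂b, hab⟩ := hG.rotate.exists_common_neighbor (by grind) h₂
  obtain ⟨c, hc, h₃c, h₄c⟩ := hG.rotate.rotate.exists_common_outer_neighbor
  obtain ⟨e, he, h₄e, h₁e⟩ := hG.rotate.rotate.rotate.exists_common_outer_neighbor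
  obtain ⟨d, hd, h₄d, hcd⟩ :=
    hG.rotate.rotate.rotate.exists_common_neighbor (p := c) (by grind) h₄c
  have hb : IsOuter x t₁ t₂ t₃ t₄ b := by grind
  have hc : IsOuter x t₁ t₂ t₃ t₄ c := by grind
  have hd : IsOuter x t₁ t₂ t₃ t₄ d := by grind
  have he : IsOuter x t₁ t₂ t₃ t₄ e := by grind
  obtain ⟨hae, hN₁⟩ := hG.outer_neighbors ha he (by grind) h₁ h₁e
  obtain ⟨-, hN₂⟩ := hG.rotate.outer_neighbors (by grind) (by grind) hab.ne h₂ h₂b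
  obtain ⟨hac, hN₃⟩ := hG.rotate.rotate.outer_neighbors (by grind) (by grind) (by grind) h₃ h₃c
  obtain ⟨-, hN₄⟩ := hG.rotate.rotate.rotate.outer_neighbors (by grind) (by grind) hcd.ne h₄c h₄d
  have hed : e = c ∨ e = d := hN₄ e (by grind) h₄e
  have hbce : b = c → e ≠ c := by
    rintro rfl rfl
    exact hG.not_adj_all (by grind) h₁e h₂b h₃c h₄c
  have hNa := hG.outer_neighbors_of_adj_three (d := d) ha h₁ h₂ h₃ hb hc he hab hac hae hed hbce
  have hmem := hG.mem_of_outer_neighbors_subset h₂ hab hac h₄d hcd hb hc hd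
    (by rintro rfl; exact h₄ h₄d) (by clear * - hN₁ hN₂ hN₃ hN₄ hNa hed; grind)
  obtain ⟨v, hv, hvW, hvabcd⟩ := hG.exists_outer_notMem hb hc he h₂b h₃c h₁e hed hbce hab.ne hac.ne
    hae.ne hN₁ (by grind) (by grind) (by grind)
  have := hmem v hv hvW
  grind

theorem adj_of_forall_outer {a b c d : V} (ha : IsOuter x t₁ t₂ t₃ t₄ a) (h₁ : G.Adj t₁ a)
    (h₂ : G.Adj t₂ a)
    (hall : ∀ v ∈ G.support, IsOuter x t₁ t₂ t₃ t₄ v → v = a ∨ v = b ∨ v = c ∨ v = d) :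
    G.Adj a c := by
  have h₃ := hG.not_adj_three ha h₁ h₂
  have h₄ := hG.rotate.rotate.rotate.not_adj_three (a := a) (by grind)
  obtain ⟨v, hav, hv⟩ := exists_adj_ne_four (hG.degree_eq_five ha h₁).ge t₁ t₂ b d
  have hx := (hG.adj_hub a).1
  have hv' := hall v ⟨a, hav.symm⟩
  have hva := hav.ne'
  rw [G.adj_comm] at hx h₃
  by_cases hvO : IsOuter x t₁ t₂ t₃ t₄ v
  · grind
  · have := hav.symm
    clear hv'
    grind

theorem mem_of_outer_cycle {a b c d : V} (ha : IsOuter x t₁ t₂ t₃ t₄ a)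
    (hb : IsOuter x t₁ t₂ t₃ t₄ b) (hc : IsOuter x t₁ t₂ t₃ t₄ c) (hd : IsOuter x t₁ t₂ t₃ t₄ d)
    (h₁a : G.Adj t₁ a) (h₂b : G.Adj t₂ b) (h₃c : G.Adj t₃ c) (h₄d : G.Adj t₄ d)
    (hab : G.Adj a b) (hbc : G.Adj b c) (hcd : G.Adj c d) (hda : G.Adj d a)
    (hac : a ≠ c) (hbd : b ≠ d)
    (hN : ∀ f v, f = t₁ ∨ f = t₂ ∨ f = t₃ ∨ f = t₄ → IsOuter x t₁ t₂ t₃ t₄ v → G.Adj f v →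
      v = a ∨ v = b ∨ v = c ∨ v = d) :
    ∀ v ∈ G.support, IsOuter x t₁ t₂ t₃ t₄ v → v = a ∨ v = b ∨ v = c ∨ v = d := by
  intro v hv hvK
  have hadj := hG.adj_hub
  have := hG.isCritical.mem_or_mem_of_cycle hG.isRooted (F := {x, t₁, t₂, t₃, t₄})
    (p₁ := a) (p₂ := b) (p₃ := c) (p₄ := d) (by simp) ?_ ?_ ?_ ?_ hac hbd hab hbc hcd hda v hv
  · simp only [Set.mem_insert_iff, Set.mem_singleton_iff, Finset.mem_insert, Finset.mem_singleton]
      at this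
    clear * - this hvK
    grind
  · intro f hf v hfv
    by_cases hvO : IsOuter x t₁ t₂ t₃ t₄ v
    · right
      have := hadj v
      have := hN f v
      simp only [Set.mem_insert_iff, Set.mem_singleton_iff] at hf
      grind
    · left
      clear * - hvO
      grind
  · exact connected_induce_of_forall_adj (x := x) (by simp)
      fun y hy hyx => (hadj y).2 (by simpa [hyx] using hy)
  · exact ⟨x, by simp, t₁, by simp, hG.adj_hub₁.ne⟩
  · simp only [List.mem_cons, List.not_mem_nil, or_false, forall_eq_or_imp, forall_eq]
    exact ⟨⟨by grind, t₁, by simp, h₁a⟩, ⟨by grind, t₂, by simp, h₂b⟩,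
      ⟨by grind, t₃, by simp, h₃c⟩, ⟨by grind, t₄, by simp, h₄d⟩⟩

theorem not_adj_of_outer_cycle {a b c d : V} (ha : IsOuter x t₁ t₂ t₃ t₄ a)
    (hb : IsOuter x t₁ t₂ t₃ t₄ b) (hc : IsOuter x t₁ t₂ t₃ t₄ c) (hd : IsOuter x t₁ t₂ t₃ t₄ d)
    (h₁a : G.Adj t₁ a) (h₂a : G.Adj t₂ a) (h₂b : G.Adj t₂ b) (h₃b : G.Adj t₃ b)
    (h₃c : G.Adj t₃ c) (h₄c : G.Adj t₄ c) (h₄d : G.Adj t₄ d) (h₁d : G.Adj t₁ d)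
    (hab : G.Adj a b) (hbc : G.Adj b c) (hcd : G.Adj c d) (hda : G.Adj d a) (hac : G.Adj a c) :
    ¬ G.Adj b d := by
  intro hbd
  refine hG.isCritical.not_hasTargetMinor (.inl (hasMinor_K6minus_of_branchSets (A := {t₂})
    (B := {t₄}) (C := {t₃}) (D := {x, t₁}) (E := {a, c}) (F := {b, d}) ?_ ?_ ?_ ?_ ?_))
  · simp [induce_pair_connected_of_adj hG.adj_hub₁, induce_pair_connected_of_adj hac,
      induce_pair_connected_of_adj hbd]
  · have := hG.nodup
    have h₁₂ := hab.ne
    have h₂₃ := hbc.ne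
    have h₃₄ := hcd.ne
    have h₄₁ := hda.ne
    clear * - this h₁₂ h₂₃ h₃₄ h₄₁ ha hb hc hd
    simp only [List.pairwise_cons, List.mem_cons, List.not_mem_nil, or_false,
      Set.disjoint_singleton_left, forall_eq_or_imp, Set.mem_singleton_iff, Set.mem_insert_iff,
      not_or, forall_eq, Set.disjoint_insert_left, IsEmpty.forall_iff, implies_true,
      List.Pairwise.nil, and_self, and_true]
    grind
  · simp [Linked, h₂a, h₂b, hG.adj₂₃, hG.adj₁₂.symm]
  · simp [Linked, h₄c, h₄d, hG.adj₃₄.symm, hG.adj₄₁]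
  · simp [Linked, h₃b, h₃c, hab, h₁a, h₁d, G.adj_comm t₃ x, hG.adj_hub]

theorem false : False := by
  obtain ⟨a, ha, h₁a, h₂a⟩ := hG.exists_common_outer_neighbor
  obtain ⟨b, hb, h₂b, h₃b⟩ := hG.rotate.exists_common_outer_neighbor
  obtain ⟨c, hc, h₃c, h₄c⟩ := hG.rotate.rotate.exists_common_outer_neighbor
  obtain ⟨d, hd, h₄d, h₁d⟩ := hG.rotate.rotate.rotate.exists_common_outer_neighbor
  have h₃a := hG.not_adj_three ha h₁a h₂a
  have h₄b := hG.rotate.not_adj_three hb h₂b h₃b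
  have h₁c := hG.rotate.rotate.not_adj_three hc h₃c h₄c
  have h₂d := hG.rotate.rotate.rotate.not_adj_three hd h₄d h₁d
  have hb : IsOuter x t₁ t₂ t₃ t₄ b := by grind
  have hc : IsOuter x t₁ t₂ t₃ t₄ c := by grind
  have hd : IsOuter x t₁ t₂ t₃ t₄ d := by grind
  obtain ⟨hda, hN₁⟩ := hG.outer_neighbors hd ha (by grind) h₁d h₁a
  obtain ⟨hab, hN₂⟩ := hG.rotate.outer_neighbors (p := a) (q := b) (by grind) (by grind)
    (by grind) h₂a h₂b
  obtain ⟨hbc, hN₃⟩ := hG.rotate.rotate.outer_neighbors (p := b) (q := c) (by grind) (by grind)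
    (by grind) h₃b h₃c
  obtain ⟨hcd, hN₄⟩ := hG.rotate.rotate.rotate.outer_neighbors (p := c) (q := d) (by grind)
    (by grind) (by grind) h₄c h₄d
  have hac : a ≠ c := by grind
  have hbd : b ≠ d := by grind
  have hall := hG.mem_of_outer_cycle ha hb hc hd h₁a h₂b h₃c h₄d hab hbc hcd hda hac hbd
    (by clear * - hN₁ hN₂ hN₃ hN₄; grind)
  have hac : G.Adj a c := hG.adj_of_forall_outer ha h₁a h₂a hall
  have hbd : G.Adj b d := hG.rotate.adj_of_forall_outer (by grind) h₂b h₃b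
    (a := b) (b := c) (c := d) (d := a) (by clear * - hall; grind)
  exact hG.not_adj_of_outer_cycle ha hb hc hd h₁a h₂a h₂b h₃b h₃c h₄c h₄d h₁d hab hbc hcd hda hac
    hbd

end IsCriticalWheel

end

/-! ### Roots that are cliques of low degree -/

section

variable {V : Type*} [Fintype V] {G : SimpleGraph V} {v a b c d : V}

theorem eq_or_eq_of_degree_le_four (hv : G.degree v ≤ 4) (hl : [a, b, c, d].Nodup)
    (h : ∀ w ∈ [a, b, c, d], G.Adj v w) {w : V} (hw : G.Adj v w) :
    w = a ∨ w = b ∨ w = c ∨ w = d := by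
  simpa using (adj_iff_mem_of_degree_le_length hl h hv w).1 hw

end

namespace IsCritical

variable {V : Type*} [Fintype V] {G : SimpleGraph V} {K : Finset V} {u w a b : V}
  (hG : IsCritical G)

include hG

theorem exists_two_common_neighbors (hK : IsRooted G K) (huw : G.Adj u w) (hKuw : K ⊆ {w, u}) :
    ∃ a b, a ≠ b ∧ G.Adj u a ∧ G.Adj w a ∧ G.Adj u b ∧ G.Adj w b := by
  obtain ⟨a, -, hua, hwa, -⟩ := hG.exists_common_neighbor_of_contract hK huw hKuw (by simp)
    (by simpa using huw.ne') (by simp) (by simp) (by simp)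
  obtain ⟨b, hb, hub, hwb, -⟩ := hG.exists_common_neighbor_of_contract (K' := {u, a}) hK huw
    (hKuw.trans (by grind)) (by simp) (by simp [huw.ne', hwa.ne])
    (Finset.card_le_two.trans (by simp)) (by simp [hua.ne, IsClique])
    (by simp [hua])
  exact ⟨a, b, by grind, hua, hwa, hub, hwb⟩

theorem exists_common_neighbor_ne (hK : IsRooted G K) (huw : G.Adj u w) (hKuw : K ⊆ {w, u})
    (z : V) : ∃ v ≠ z, G.Adj u v ∧ G.Adj w v := by
  obtain ⟨a, b, hab, ha, ha', hb, hb'⟩ := hG.exists_two_common_neighbors hK huw hKuw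
  obtain rfl | haz := eq_or_ne a z
  exacts [⟨b, hab.symm, hb, hb'⟩, ⟨a, haz, ha, ha'⟩]

theorem exists_third_common_neighbor (hK : IsRooted G K) (huw : G.Adj u w) (hKuw : K ⊆ {w, u})
    (hab : G.Adj a b) (hua : G.Adj u a) (hub : G.Adj u b) (hwa : G.Adj w a) (hwb : G.Adj w b) :
    ∃ c, c ≠ a ∧ c ≠ b ∧ G.Adj u c ∧ G.Adj w c := by
  obtain ⟨c, hc, huc, hwc, -⟩ := hG.exists_common_neighbor_of_contract (K' := {u, a, b}) hK huw
    (hKuw.trans (by grind)) (by simp) (by simp [huw.ne', hwa.ne, hwb.ne]) Finset.card_le_three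
    (isClique_erase_of_adj hab) (by simp [hua, hub])
  exact ⟨c, by grind, by grind, huc, hwc⟩

section Singleton

variable {x t₁ t₂ t₃ t₄ : V}

theorem not_isRooted_singleton_of_rim (hx : G.degree x ≤ 4) (hnd : [t₁, t₂, t₃, t₄].Nodup)
    (hadj : ∀ t ∈ [t₁, t₂, t₃, t₄], G.Adj x t) (h₁₂ : G.Adj t₁ t₂) (h₂₃ : G.Adj t₂ t₃)
    (h₃₄ : G.Adj t₃ t₄) (h₄₁ : G.Adj t₄ t₁) : ¬ IsRooted G {x} := by
  intro hK
  have hhub : IsWheel G x t₁ t₂ t₃ t₄ :=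
    ⟨by simpa using adj_iff_mem_of_degree_le_length hnd hadj (by simpa using hx),
      by grind, by grind, h₁₂, h₂₃, h₃₄, h₄₁⟩
  have hxt : G.Adj x t₁ := hadj t₁ (by simp)
  have h5 : 5 ≤ G.degree t₁ := hK.five_le_degree t₁ ⟨x, hxt.symm⟩ (by simpa using hxt.ne')
  obtain ⟨y, hty, hy⟩ := exists_adj_ne_four h5 x t₂ t₃ t₄
  exact IsCriticalWheel.false ⟨hhub, hG, .inr ⟨x, t₁, t₂, t₃, t₄, rfl, hhub⟩,
    fun v hv hvK => hK.five_le_degree v hv (by grind), y, ⟨t₁, hty.symm⟩, by grind [hty.ne]⟩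

theorem not_isRooted_singleton (hx : G.degree x ≤ 4) (hxt : G.Adj x t₁) : ¬ IsRooted G {x} := by
  intro hK
  obtain ⟨a, b, hab, hxa, hta, hxb, htb⟩ :=
    hG.exists_two_common_neighbors hK hxt (by simp)
  by_cases hadj : G.Adj a b
  · obtain ⟨c, hca, hcb, hxc, htc⟩ :=
      hG.exists_third_common_neighbor hK hxt (by simp) hadj hxa hxb hta htb
    have hnd : [t₁, a, b, c].Nodup := by grind [hta.ne, htb.ne, htc.ne]
    obtain ⟨p, hp, hxp, hcp⟩ := hG.exists_common_neighbor_ne hK hxc (by simp) t₁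
    have hpab : p = a ∨ p = b := by
      have := eq_or_eq_of_degree_le_four hx hnd (by simp [hxt, hxa, hxb, hxc]) hxp
      grind [hcp.ne]
    obtain rfl | rfl := hpab
    · exact hG.not_isRooted_singleton_of_rim (t₁ := t₁) (t₂ := b) (t₃ := p) (t₄ := c) hx
        (by grind) (by simp [hxt, hxa, hxb, hxc]) htb hadj.symm hcp.symm htc.symm hK
    · exact hG.not_isRooted_singleton_of_rim hx hnd (by simp [hxt, hxa, hxb, hxc]) hta hadj
        hcp.symm htc.symm hK
  · obtain ⟨d, hdt, hxd, had⟩ := hG.exists_common_neighbor_ne hK hxa (by simp) t₁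
    obtain ⟨e, het, hxe, hbe⟩ := hG.exists_common_neighbor_ne hK hxb (by simp) t₁
    have hnd : [t₁, a, d, b].Nodup := by grind [hta.ne, htb.ne, had.ne]
    have hadj' : ∀ t ∈ [t₁, a, d, b], G.Adj x t := by simp [hxt, hxa, hxb, hxd]
    obtain rfl : e = d := by
      have := eq_or_eq_of_degree_le_four hx hnd hadj' hxe
      grind [hbe.ne, hbe.symm]
    exact hG.not_isRooted_singleton_of_rim hx hnd hadj' hta had hbe.symm htb.symm hK

end Singleton

section Pair

variable {t₁ t₂ c q r : V}

theorem not_isRooted_pair_of_three (h₁₂ : G.Adj t₁ t₂)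
    (hN₁ : ∀ v, G.Adj t₁ v → v = t₂ ∨ v = a ∨ v = b ∨ v = c)
    (hN₂ : ∀ v, G.Adj t₂ v → v = t₁ ∨ v = a ∨ v = b ∨ v = c)
    (ha : G.Adj t₁ a) (hb : G.Adj t₁ b) (hc : G.Adj t₁ c) (ha' : G.Adj t₂ a) (hb' : G.Adj t₂ b)
    (hc' : G.Adj t₂ c) (hbc : G.Adj b c) : ¬ IsRooted G {t₁, t₂} := by
  intro hK
  have hall := hG.mem_or_mem_of_isClique hK (F := {t₁, t₂}) (P := {a, b, c}) (p := a) (by simp)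
    (by grind) (induce_pair_connected_of_adj h₁₂) ?_ (by simp) Finset.card_le_three
    (isClique_erase_of_adj hbc) (by simp [ha, hb, hc])
  · have h5 : 5 ≤ G.degree a :=
      hK.five_le_degree a ⟨t₁, ha.symm⟩ (by simp [ha.ne', ha'.ne'])
    obtain ⟨v, hav, hv⟩ := exists_adj_ne_four h5 t₁ t₂ b c
    have := hall v ⟨a, hav.symm⟩
    grind [hav.ne]
  · simp [ha.ne', hb.ne', hc.ne', ha'.ne', hb'.ne', hc'.ne']

theorem not_isRooted_pair_of_four (h₁₂ : G.Adj t₁ t₂)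
    (hN₁ : ∀ v, G.Adj t₁ v → v = t₂ ∨ v = a ∨ v = b ∨ v = q)
    (hN₂ : ∀ v, G.Adj t₂ v → v = t₁ ∨ v = a ∨ v = b ∨ v = r)
    (ha : G.Adj t₁ a) (hb : G.Adj t₁ b) (ha' : G.Adj t₂ a) (hb' : G.Adj t₂ b)
    (hq : G.Adj t₁ q) (hr : G.Adj t₂ r) (hqt : q ≠ t₂) (hrt : r ≠ t₁) (hqr : q ≠ r)
    (hab : ¬ G.Adj a b) (hne : a ≠ b) (haq : G.Adj a q) (hbq : G.Adj b q) (har : G.Adj a r)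
    (hbr : G.Adj b r) : ¬ IsRooted G {t₁, t₂} := by
  intro hK
  have hall := hG.mem_or_mem_of_cycle hK (F := {t₁, t₂}) (p₁ := a) (p₂ := q) (p₃ := b) (p₄ := r)
    (by simp) (by grind) (induce_pair_connected_of_adj h₁₂)
    ⟨t₁, by simp, t₂, by simp, h₁₂.ne⟩ ?_ hne hqr haq hbq.symm hbr har.symm
  · have h5 : 5 ≤ G.degree a :=
      hK.five_le_degree a ⟨t₁, ha.symm⟩ (by simp [ha.ne', ha'.ne'])
    obtain ⟨v, hav, hv⟩ := exists_adj_ne_four h5 t₁ t₂ q r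
    have := hall v ⟨a, hav.symm⟩
    grind [hav.ne]
  · simp [ha, hb, hq, hr, ha.ne', hb.ne', ha'.ne', hb'.ne', hq.ne', hr.ne', hqt, hrt]

theorem exists_common_neighbor_notMem_pair (hK : IsRooted G {t₁, t₂}) (h₁₂ : G.Adj t₁ t₂)
    (ha : G.Adj t₁ a) (ha' : G.Adj t₂ a) : ∃ v ≠ t₂, G.Adj t₁ v ∧ G.Adj a v := by
  obtain ⟨v, hv, hv₁, hav, -⟩ := hG.exists_common_neighbor_of_contract hK ha
    (Finset.subset_insert _ _) (by simp) (by simp [ha.ne', ha'.ne'])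
    (Finset.card_le_two.trans (by simp)) (by simp [h₁₂.ne, IsClique]) (by simp [h₁₂])
  exact ⟨v, by grind, hv₁, hav⟩

theorem not_isRooted_pair (h₁₂ : G.Adj t₁ t₂) (hd₁ : G.degree t₁ ≤ 4) (hd₂ : G.degree t₂ ≤ 4) :
    ¬ IsRooted G {t₁, t₂} := by
  intro hK
  have hK' : IsRooted G {t₂, t₁} := by rwa [Finset.pair_comm]
  obtain ⟨a, b, hab, ha, ha', hb, hb'⟩ :=
    hG.exists_two_common_neighbors hK h₁₂ (by rw [Finset.pair_comm])
  by_cases hadj : G.Adj a b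
  · obtain ⟨c, hca, hcb, hc, hc'⟩ := hG.exists_third_common_neighbor hK h₁₂
      (by rw [Finset.pair_comm]) hadj ha hb ha' hb'
    have hN₁ (v) := eq_or_eq_of_degree_le_four hd₁ (a := t₂) (b := c) (c := a) (d := b) (w := v)
      (by grind [ha'.ne, hb'.ne, hc'.ne]) (by simp [h₁₂, ha, hb, hc])
    have hN₂ (v) := eq_or_eq_of_degree_le_four hd₂ (a := t₁) (b := c) (c := a) (d := b) (w := v)
      (by grind [ha.ne, hb.ne, hc.ne]) (by simp [h₁₂.symm, ha', hb', hc'])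
    exact hG.not_isRooted_pair_of_three h₁₂ hN₁ hN₂ hc ha hb hc' ha' hb' hadj hK
  obtain ⟨q, hqt, hq, haq⟩ := hG.exists_common_neighbor_notMem_pair hK h₁₂ ha ha'
  obtain ⟨r, hrt, hr, har⟩ := hG.exists_common_neighbor_notMem_pair hK' h₁₂.symm ha' ha
  have hN₁ (v) := eq_or_eq_of_degree_le_four hd₁ (a := t₂) (b := a) (c := b) (d := q) (w := v)
    (by grind [ha'.ne, hb'.ne, haq.ne]) (by simp [h₁₂, ha, hb, hq])
  have hN₂ (v) := eq_or_eq_of_degree_le_four hd₂ (a := t₁) (b := a) (c := b) (d := r) (w := v)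
    (by grind [ha.ne, hb.ne, har.ne]) (by simp [h₁₂.symm, ha', hb', hr])
  have hbq : G.Adj b q := by
    obtain ⟨v, hvt, hv, hbv⟩ := hG.exists_common_neighbor_notMem_pair hK h₁₂ hb hb'
    grind [hbv.ne, hbv.symm]
  have hbr : G.Adj b r := by
    obtain ⟨v, hvt, hv, hbv⟩ := hG.exists_common_neighbor_notMem_pair hK' h₁₂.symm hb' hb
    grind [hbv.ne, hbv.symm]
  obtain rfl | hqr := eq_or_ne q r
  · exact hG.not_isRooted_pair_of_three h₁₂ hN₁ hN₂ ha hb hq ha' hb' hr hbq hK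
  · exact hG.not_isRooted_pair_of_four h₁₂ hN₁ hN₂ ha hb ha' hb' hq hr hqt hrt hqr hadj hab haq
      hbq har hbr hK

end Pair

end IsCritical

section

variable {V : Type*} [Fintype V] {G : SimpleGraph V} {t₁ t₂ t₃ p q r s a b c : V}

/-- A critical graph rooted at a triangle whose vertices have degree at most 4. -/
structure IsCriticalTriangle (G : SimpleGraph V) (t₁ t₂ t₃ : V) : Prop where
  isCritical : IsCritical G
  isRooted : IsRooted G {t₁, t₂, t₃}
  adj₁₂ : G.Adj t₁ t₂
  adj₂₃ : G.Adj t₂ t₃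
  adj₃₁ : G.Adj t₃ t₁
  degree_le₁ : G.degree t₁ ≤ 4
  degree_le₂ : G.degree t₂ ≤ 4
  degree_le₃ : G.degree t₃ ≤ 4

namespace IsCriticalTriangle

variable (hG : IsCriticalTriangle G t₁ t₂ t₃)

include hG

theorem rotate : IsCriticalTriangle G t₂ t₃ t₁ where
  isCritical := hG.isCritical
  isRooted := by
    convert hG.isRooted using 1
    grind
  adj₁₂ := hG.adj₂₃
  adj₂₃ := hG.adj₃₁
  adj₃₁ := hG.adj₁₂
  degree_le₁ := hG.degree_le₂
  degree_le₂ := hG.degree_le₃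
  degree_le₃ := hG.degree_le₁

theorem isClique_erase : G.IsClique (({t₁, t₂, t₃} : Finset V).erase t₁ : Finset V) :=
  isClique_erase_of_adj hG.adj₂₃

theorem exists_adj_iff (hp₂ : p ≠ t₂) (hp₃ : p ≠ t₃) (htp : G.Adj t₁ p) :
    ∃ q, q ≠ t₂ ∧ q ≠ t₃ ∧ G.Adj p q ∧ ∀ v, G.Adj t₁ v ↔ v = t₂ ∨ v = t₃ ∨ v = p ∨ v = q := by
  have h₁₃ := hG.adj₃₁.symm
  obtain ⟨q, hq, htq, hpq, -⟩ := hG.isCritical.exists_common_neighbor_of_contract hG.isRooted htp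
    (Finset.subset_insert _ _) (by simp) (by simp [htp.ne', hp₂, hp₃]) Finset.card_le_three
    hG.isClique_erase (by simp [hG.adj₁₂, h₁₃])
  simp only [Finset.mem_insert, Finset.mem_singleton, not_or] at hq
  have hnd : [t₂, t₃, p, q].Nodup := by
    have := hG.adj₂₃.ne
    have := hpq.ne
    grind
  have hadj : ∀ v ∈ [t₂, t₃, p, q], G.Adj t₁ v := by simp [hG.adj₁₂, h₁₃, htp, htq]
  exact ⟨q, hq.2.1, hq.2.2, hpq, by
    simpa using adj_iff_mem_of_degree_le_length hnd hadj hG.degree_le₁⟩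

theorem exists_common_outer_neighbor : ∃ p, p ≠ t₃ ∧ G.Adj t₁ p ∧ G.Adj t₂ p := by
  obtain ⟨p, hp, h₁, h₂, -⟩ := hG.isCritical.exists_common_neighbor_of_contract (K' := {t₁, t₃})
    hG.isRooted hG.adj₁₂ (by grind) (by simp) (by simp [hG.adj₁₂.ne', hG.adj₂₃.ne])
    (Finset.card_le_two.trans (by simp)) (by simp [hG.adj₃₁.ne', IsClique])
    (by simp [hG.adj₂₃])
  exact ⟨p, by grind, h₁, h₂⟩

theorem eq_of_outer_neighbors_subset (hbc : G.Adj b c)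
    (hP : ∀ w ∈ [a, b, c], w ≠ t₁ ∧ w ≠ t₂ ∧ w ≠ t₃ ∧ (G.Adj t₁ w ∨ G.Adj t₂ w ∨ G.Adj t₃ w))
    (hN : ∀ v, G.Adj t₁ v ∨ G.Adj t₂ v ∨ G.Adj t₃ v →
      v = t₁ ∨ v = t₂ ∨ v = t₃ ∨ v = a ∨ v = b ∨ v = c) :
    ∀ v ∈ G.support, v = t₁ ∨ v = t₂ ∨ v = t₃ ∨ v = a ∨ v = b ∨ v = c := by
  have hall := hG.isCritical.mem_or_mem_of_isClique hG.isRooted (F := {t₁, t₂, t₃})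
    (P := {a, b, c}) (p := a) (by simp) (fun f hf v hfv => ?_)
    (connected_induce_of_forall_adj (x := t₁) (by simp)
      (by simp [hG.adj₁₂, hG.adj₃₁.symm])) ?_ (by simp) Finset.card_le_three
    (isClique_erase_of_adj hbc) (by simpa using fun w hw => (hP w hw).2.2.2)
  · simpa [or_assoc] using hall
  · have := hN v
    simp only [Set.mem_insert_iff, Set.mem_singleton_iff, Finset.mem_insert,
      Finset.mem_singleton] at hf ⊢
    grind
  · rw [Set.disjoint_right]
    intro w hw
    have := hP w (by simpa using hw)
    simp [this]

theorem false_of_outer_neighbors_eq (hpq : G.Adj p q) (hps : G.Adj p s) (hq₃ : q ≠ t₃)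
    (hs₁ : s ≠ t₁) (hs₂ : s ≠ t₂)
    (h₁ : ∀ v, G.Adj t₁ v ↔ v = t₂ ∨ v = t₃ ∨ v = p ∨ v = q)
    (h₂ : ∀ v, G.Adj t₂ v ↔ v = t₃ ∨ v = t₁ ∨ v = p ∨ v = q)
    (h₃ : ∀ v, G.Adj t₃ v ↔ v = t₁ ∨ v = t₂ ∨ v = p ∨ v = s) : False := by
  have hp₁ : G.Adj t₁ p := by simp [h₁]
  have hp₂ : G.Adj t₂ p := by simp [h₂]
  have hp₃ : G.Adj t₃ p := by simp [h₃]
  have hq₁ : G.Adj t₁ q := by simp [h₁]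
  have hq₂ : G.Adj t₂ q := by simp [h₂]
  have hs₃ : G.Adj t₃ s := by simp [h₃]
  have hall := hG.eq_of_outer_neighbors_subset (a := s) hpq
    (by simp [hp₁.ne', hp₂.ne', hp₃.ne', hq₁.ne', hq₂.ne', hs₃.ne', hs₁, hs₂, hq₃, hp₁, hq₁, hs₃])
    (by simp only [h₁, h₂, h₃]; tauto)
  have hsupp : ∀ {w}, G.Adj s w → w ∈ G.support := fun h => ⟨s, h.symm⟩
  have hds := hG.isRooted.five_le_degree s ⟨t₃, hs₃.symm⟩ (by simp [hs₁, hs₂, hs₃.ne'])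
  obtain ⟨w, hw, hw₁, hw₂, hw₃, hwp⟩ := exists_adj_ne_four hds t₁ t₂ t₃ p
  obtain ⟨x, hx, hx₃, hxp, hxq, -⟩ := exists_adj_ne_four hds t₃ p q q
  have := hall w (hsupp hw)
  have := hall x (hsupp hx)
  have := hw.ne
  have := hx.ne
  have := hps.ne
  have := h₁ s
  have := h₂ s
  grind [G.adj_comm]

theorem not_adj_all (h₁ : G.Adj t₁ p) (h₂ : G.Adj t₂ p) : ¬ G.Adj t₃ p := by
  intro h₃
  obtain ⟨q, hq₂, hq₃, hpq, hNq⟩ := hG.exists_adj_iff h₂.ne' h₃.ne' h₁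
  obtain ⟨r, hr₃, hr₁, hpr, hNr⟩ := hG.rotate.exists_adj_iff h₃.ne' h₁.ne' h₂
  obtain ⟨s, hs₁, hs₂, hps, hNs⟩ := hG.rotate.rotate.exists_adj_iff h₁.ne' h₂.ne' h₃
  have hqr : q ≠ r := by
    rintro rfl
    exact hG.false_of_outer_neighbors_eq hpq hps hq₃ hs₁ hs₂ hNq hNr hNs
  have hrs : r ≠ s := by
    rintro rfl
    exact hG.rotate.false_of_outer_neighbors_eq hpr hpq hr₁ hq₂ hq₃ hNr hNs hNq
  have hsq : s ≠ q := by
    rintro rfl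
    exact hG.rotate.rotate.false_of_outer_neighbors_eq hps hpr hs₂ hr₃ hr₁ hNs hNq hNr
  have hp := hG.isCritical.degree_eq_five_of_adj_root hG.isRooted (t := t₁) (p := p) (by simp)
    (by simp [h₁.ne', h₂.ne', h₃.ne']) h₁
  have hq₁ := (hNq q).2 (by simp)
  have hr₂ := (hNr r).2 (by simp)
  have hs₃ := (hNs s).2 (by simp)
  have hnd : [t₁, t₂, t₃, q, r, s].Nodup := by
    have := hG.adj₁₂.ne
    have := hG.adj₂₃.ne
    have := hG.adj₃₁.ne
    have := hq₁.ne
    have := hr₂.ne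
    have := hs₃.ne
    grind
  exact absurd (length_le_degree hnd (v := p) (G := G)
    (by simp [h₁.symm, h₂.symm, h₃.symm, hpq, hpr, hps])) (by simp [hp])

theorem false : False := by
  obtain ⟨a, ha₃, ha₁, ha₂⟩ := hG.exists_common_outer_neighbor
  obtain ⟨b, hb₁, hb₂, hb₃⟩ := hG.rotate.exists_common_outer_neighbor
  obtain ⟨c, hc₂, hc₃, hc₁⟩ := hG.rotate.rotate.exists_common_outer_neighbor
  have ha := hG.not_adj_all ha₁ ha₂
  have hb := hG.rotate.not_adj_all hb₂ hb₃
  have hc := hG.rotate.rotate.not_adj_all hc₃ hc₁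
  obtain ⟨x, hx₂, hx₃, hax, hN₁⟩ := hG.exists_adj_iff ha₂.ne' ha₃ ha₁
  obtain ⟨y, hy₃, hy₁, hby, hN₂⟩ := hG.rotate.exists_adj_iff hb₃.ne' hb₁ hb₂
  obtain ⟨z, hz₁, hz₂, hcz, hN₃⟩ := hG.rotate.rotate.exists_adj_iff hc₁.ne' hc₂ hc₃
  obtain rfl : c = x := by
    have := (hN₁ c).1 hc₁
    grind
  obtain rfl : a = y := by
    have := (hN₂ a).1 ha₂
    grind
  obtain rfl : b = z := by
    have := (hN₃ b).1 hb₃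
    grind
  have hall := hG.eq_of_outer_neighbors_subset (a := a) hcz.symm
    (by simp [ha₁.ne', ha₂.ne', ha₃, hb₁, hb₂.ne', hb₃.ne', hc₁.ne', hc₂, hc₃.ne', ha₁, hb₂, hc₁])
    (by simp only [hN₁, hN₂, hN₃]; tauto)
  have hda := hG.isRooted.five_le_degree a ⟨t₁, ha₁.symm⟩ (by simp [ha₁.ne', ha₂.ne', ha₃])
  obtain ⟨w, hw, hw₁, hw₂, hwb, hwc⟩ := exists_adj_ne_four hda t₁ t₂ b c
  have := hall w ⟨a, hw.symm⟩
  have := hw.ne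
  grind [G.adj_comm]

end IsCriticalTriangle

theorem IsCritical.not_isRooted_triangle (hG : IsCritical G) (h₁₂ : G.Adj t₁ t₂)
    (h₂₃ : G.Adj t₂ t₃) (h₃₁ : G.Adj t₃ t₁) (hd₁ : G.degree t₁ ≤ 4) (hd₂ : G.degree t₂ ≤ 4)
    (hd₃ : G.degree t₃ ≤ 4) : ¬ IsRooted G {t₁, t₂, t₃} :=
  fun hK => IsCriticalTriangle.false ⟨hG, hK, h₁₂, h₂₃, h₃₁, hd₁, hd₂, hd₃⟩

end

/-! ### Critical graphs with empty root -/

section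

variable {V : Type*} {G : SimpleGraph V} {u w a b c d e : V} {X D F : Set V}

/-- `D` is the vertex set of a component of `G - X` that contains a vertex of the support of `G`. -/
structure IsComponentAvoiding (G : SimpleGraph V) (X D : Set V) : Prop where
  connected : (G.induce D).Connected
  disjoint : Disjoint D X
  exists_mem : ∃ v ∈ G.support, v ∈ D
  mem_or_mem_of_adj : ∀ v ∈ D, ∀ w, G.Adj v w → w ∈ D ∨ w ∈ X

theorem IsComponentAvoiding.not_linked_singleton (hD : IsComponentAvoiding G X D)
    (hX : ∀ v, G.Adj a v → v ∈ X) : ¬ Linked G D {a} := by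
  rintro ⟨v, hv, x, rfl, hva⟩
  exact Set.disjoint_left.1 hD.disjoint hv (hX v hva.symm)

theorem exists_isComponentAvoiding [Finite V] {r : V} (hr : r ∉ X) (hrG : r ∈ G.support) :
    ∃ D, r ∈ D ∧ IsComponentAvoiding G X D := by
  obtain ⟨D, hrD, hD⟩ := Finite.exists_le_maximal
    (p := fun D : Set V => (G.induce D).Connected ∧ Disjoint D X) (a := {r})
    ⟨connected_induce_singleton r, Set.disjoint_singleton_left.2 hr⟩
  refine ⟨D, hrD rfl, hD.prop.1, hD.prop.2, ⟨r, hrG, hrD rfl⟩, fun v hv w hvw => ?_⟩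
  by_contra! hw
  exact hw.1 (hD.le_of_ge ⟨connected_induce_insert hD.prop.1 hv hvw.symm,
    Set.disjoint_insert_left.2 ⟨hw.2, hD.prop.2⟩⟩ (Set.subset_insert w D) (Set.mem_insert w D))

variable [Fintype V]

/-- A critical graph with empty root, so that every vertex of its support has degree at
least 5. -/
structure IsCriticalUnrooted (G : SimpleGraph V) : Prop where
  isCritical : IsCritical G
  isRooted : IsRooted G ∅

namespace IsCriticalUnrooted

variable (hG : IsCriticalUnrooted G)

include hG

theorem five_le_degree (h : G.Adj u w) : 5 ≤ G.degree u :=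
  hG.isRooted.five_le_degree u ⟨w, h⟩ (by simp)

theorem exists_degree_eq_five : ∃ u, G.degree u = 5 := by
  by_contra! hne
  obtain ⟨u, ⟨w, huw⟩, -⟩ := hG.isRooted.exists_notMem
  have hu := hG.five_le_degree huw
  have hw := hG.five_le_degree huw.symm
  have := hne u
  have := hne w
  exact hG.isCritical.not_isRoot_deleteEdge hG.isRooted huw (.inr (by lia)) (.inr (by lia))
    (.inl ⟨by simp, by simp⟩)

theorem exists_common_neighbor_notMem (huw : G.Adj u w) {S : Finset V} (hS : S.card ≤ 2)
    (hclique : G.IsClique (S : Set V)) (hSu : ∀ v ∈ S, G.Adj u v) (hSw : ∀ v ∈ S, G.Adj w v) :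
    ∃ v ∉ S, G.Adj u v ∧ G.Adj w v ∧ G.degree v = 5 := by
  have hu : u ∉ S := fun h => (hSu u h).ne rfl
  have hw : w ∉ S := fun h => (hSw w h).ne rfl
  obtain ⟨v, hv, huv, hwv, hdv⟩ := hG.isCritical.exists_common_neighbor_of_contract
    (K' := insert u S) hG.isRooted huw (by simp) (by simp) (by simp [huw.ne', hw])
    ((Finset.card_insert_le u S).trans (by lia)) (by rwa [Finset.erase_insert hu])
    (by simp +contextual [hSu])
  exact ⟨v, by simp_all, huv, hwv, hdv⟩

theorem exists_nonadj_or_isNClique (huw : G.Adj u w) :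
    (∃ a b, a ≠ b ∧ ¬ G.Adj a b ∧ G.degree a = 5 ∧ G.degree b = 5 ∧
      G.Adj u a ∧ G.Adj u b ∧ G.Adj w a ∧ G.Adj w b) ∨
    ∃ S, G.IsNClique 3 S ∧ (∀ v ∈ S, G.Adj u v) ∧ ∀ v ∈ S, G.Adj w v := by
  by_contra! hN
  obtain ⟨hnon, hcl⟩ := hN
  obtain ⟨a, -, hua, hwa, hda⟩ := hG.exists_common_neighbor_notMem huw (S := ∅) (by simp)
    (by simp) (by simp) (by simp)
  obtain ⟨b, hb, hub, hwb, hdb⟩ := hG.exists_common_neighbor_notMem huw (S := {a}) (by simp)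
    (by simp) (by simp [hua]) (by simp [hwa])
  have hba : b ≠ a := by simpa using hb
  have hab : G.Adj a b := by
    by_contra h
    exact hnon a b hba.symm h hda hdb hua hub hwa hwb
  obtain ⟨c, hc, huc, hwc, hdc⟩ := hG.exists_common_neighbor_notMem huw (S := {a, b})
    Finset.card_le_two (by simp [hab, IsClique]) (by simp [hua, hub]) (by simp [hwa, hwb])
  have hca : c ≠ a := by grind
  have hcb : c ≠ b := by grind
  have hac : G.Adj a c := by
    by_contra h
    exact hnon a c hca.symm h hda hdc hua huc hwa hwc
  have hbc : G.Adj b c := by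
    by_contra h
    exact hnon b c hcb.symm h hdb hdc hub huc hwb hwc
  obtain ⟨v, hv, hwv⟩ := hcl {a, b, c} (is3Clique_triple_iff.2 ⟨hab, hac, hbc⟩)
    (by simp [hua, hub, huc])
  simp only [Finset.mem_insert, Finset.mem_singleton] at hv
  grind

theorem not_forall_adj_of_isNClique_four {S : Finset V} (hu : G.degree u = 5)
    (hS : G.IsNClique 4 S) : ¬ ∀ v ∈ S, G.Adj u v := by
  intro hSu
  obtain ⟨e, hue, heS⟩ := exists_adj_notMem_of_card_lt_degree (S := S) (v := u) (G := G)
    (by rw [hS.card_eq]; lia)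
  have hcommon {v} (huv : G.Adj u v) (hev : G.Adj e v) : v ∈ S := by
    by_contra hvS
    have : (insert v (insert e S)).card ≤ G.degree u := card_le_degree (by simpa [huv, hue])
    rw [Finset.card_insert_of_notMem (by simp [hvS, hev.ne']), Finset.card_insert_of_notMem heS,
      hS.card_eq] at this
    lia
  obtain ⟨a, b, hab, hnab, -, -, hua, hub, hea, heb⟩ | ⟨T, hT, hTu, hTe⟩ :=
    hG.exists_nonadj_or_isNClique hue
  · exact hnab (hS.isClique (hcommon hua hea) (hcommon hub heb) hab)
  · obtain ⟨p, q, r, hpq, hpr, hqr, rfl⟩ := is3Clique_iff.1 hT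
    have hTS : {p, q, r} ⊆ S := fun v hv => hcommon (hTu v hv) (hTe v hv)
    obtain ⟨x, hx, hxT⟩ := Finset.exists_mem_notMem_of_card_lt_card
      (s := {p, q, r}) (t := S) (by rw [hT.card_eq, hS.card_eq]; lia)
    have hxe : x ≠ e := by grind
    have hxadj {v} (hv : v ∈ ({p, q, r} : Finset V)) : G.Adj x v :=
      hS.isClique hx (hTS hv) (by grind)
    refine hG.isCritical.not_hasTargetMinor (.inl (hasMinor_K6minus_of_adj (a := x) (b := e)
      (c := u) (d := p) (e := q) (f := r) hxe ?_ ?_ ?_))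
    · simp [(hSu x hx).symm, hxadj]
    · simp [hue.symm, hTe]
    · simp [hTu, hpq, hpr, hqr]

theorem exists_nonadj_common_neighbors (hu : G.degree u = 5) (huw : G.Adj u w) :
    ∃ a b, a ≠ b ∧ ¬ G.Adj a b ∧ G.degree a = 5 ∧ G.degree b = 5 ∧
      G.Adj u a ∧ G.Adj u b ∧ G.Adj w a ∧ G.Adj w b := by
  obtain h | ⟨S, hS, hSu, hSw⟩ := hG.exists_nonadj_or_isNClique huw
  · exact h
  · refine absurd ?_ (hG.not_forall_adj_of_isNClique_four hu (hS.insert hSw))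
    simpa [huw] using hSu

end IsCriticalUnrooted

theorem IsComponentAvoiding.isFarSide (hD : IsComponentAvoiding G X D)
    (hG : IsCriticalUnrooted G) {P : Finset V}
    (hF : F ⊆ X) (hP : (P : Set V) ⊆ X) (hX : ∀ x ∈ X, x ∉ P → ¬ Linked G D {x}) :
    IsFarSide G F P D where
  disjoint_near := hD.disjoint.mono_right hF
  disjoint_separator := hD.disjoint.mono_right hP
  five_le_degree v hv _ := hG.isRooted.five_le_degree v hv (by simp)
  exists_mem := hD.exists_mem
  mem_or_mem_of_adj v hv w hvw := by
    refine (hD.mem_or_mem_of_adj v hv w hvw).imp_right fun hw => ?_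
    by_contra hwP
    exact hX w hw hwP ⟨v, hv, w, rfl, hvw⟩

/-- `u` has degree 5 in a critical graph with empty root, and its neighbourhood contains the
complete bipartite graph with sides `{a, b}` and `{c, d, e}`. -/
structure IsK23Center (G : SimpleGraph V) (u a b c d e : V) : Prop
    extends IsCriticalUnrooted G where
  degree_eq : G.degree u = 5
  nodup : [a, b, c, d, e].Nodup
  adj : ∀ v ∈ [a, b, c, d, e], G.Adj u v
  adj_left : ∀ v ∈ [c, d, e], G.Adj a v
  adj_right : ∀ v ∈ [c, d, e], G.Adj b v

namespace IsK23Center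

variable (hu : IsK23Center G u a b c d e)

include hu

theorem swap_sides : IsK23Center G u b a c d e where
  __ := hu
  nodup := by grind [hu.nodup]
  adj := by grind [hu.adj]
  adj_left := hu.adj_right
  adj_right := hu.adj_left

theorem rotate : IsK23Center G u a b d e c where
  __ := hu
  nodup := by grind [hu.nodup]
  adj := by grind [hu.adj]
  adj_left := by grind [hu.adj_left]
  adj_right := by grind [hu.adj_right]

theorem reflect : IsK23Center G u a b d c e where
  __ := hu
  nodup := by grind [hu.nodup]
  adj := by grind [hu.adj]
  adj_left := by grind [hu.adj_left]
  adj_right := by grind [hu.adj_right]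

theorem adj_iff (v : V) : G.Adj u v ↔ v = a ∨ v = b ∨ v = c ∨ v = d ∨ v = e := by
  simpa using adj_iff_mem_of_degree_le_length hu.nodup hu.adj hu.degree_eq.le v

theorem not_linked_of_linked (hcd : G.Adj c d)
    (hD : IsComponentAvoiding G (insert u (G.neighborSet u)) D) (hDc : Linked G D {c})
    (hDd : Linked G D {d}) (hDa : Linked G D {a}) : ¬ Linked G D {b, e} := by
  intro hDbe
  obtain ⟨huD, hND⟩ : u ∉ D ∧ ∀ v, G.Adj u v → v ∉ D := by
    simpa [Set.disjoint_right] using hD.disjoint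
  have hadj := hu.adj
  have hl := hu.adj_left
  have hr := hu.adj_right
  have hnd := hu.nodup
  refine hu.isCritical.not_hasTargetMinor (.inl (hasMinor_K6minus_of_branchSets (A := {u}) (B := D)
    (C := {b, e}) (D := {a}) (E := {c}) (F := {d}) ?_ ?_ ?_ ?_ ?_))
  · simp [hD.connected, induce_pair_connected_of_adj (hr e (by simp))]
  · have huX {v} (hv : v ∈ [a, b, c, d, e]) := (hadj v hv).ne
    simp only [List.pairwise_cons, List.mem_cons, List.not_mem_nil, or_false, forall_eq_or_imp,
      forall_eq, Set.disjoint_left, Set.mem_insert_iff, Set.mem_singleton_iff, List.nodup_cons] at *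
    grind
  · simp_all [Linked]
  · simp_all
  · simp_all [Linked, G.adj_comm]

theorem linked_of_isComponentAvoiding (hcd : G.Adj c d)
    (hD : IsComponentAvoiding G (insert u (G.neighborSet u)) D) : Linked G D {d} := by
  by_contra hDd
  have hadj := hu.adj
  have hl := hu.adj_left
  have hr := hu.adj_right
  have hnd := hu.nodup
  refine hu.isCritical.not_isFarSide_of_cycle (F := {u, d}) (p₁ := a) (p₂ := c) (p₃ := b) (p₄ := e)
    (induce_pair_connected_of_adj (hu.adj d (by simp))) ?_ ?_ ?_ ?_ ?_ ?_ ?_ ?_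
    (hD.isFarSide hu.toIsCriticalUnrooted ?_ ?_ ?_)
  · exact Set.nontrivial_pair (hadj d (by simp)).ne
  · simp only [List.mem_cons, List.not_mem_nil, or_false, Set.mem_insert_iff, Set.mem_singleton_iff,
      not_or, exists_eq_or_imp, ↓existsAndEq, true_and, forall_eq_or_imp, forall_eq]
    grind [Adj.ne]
  · grind
  · grind
  · simp [hl]
  · simp [hr, G.adj_comm _ b]
  · simp [hr]
  · simp [hl, G.adj_comm _ a]
  · simp [Set.insert_subset_iff, hadj]
  · simp [Set.insert_subset_iff, hadj]
  · rintro x (rfl | hx) hxP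
    · exact hD.not_linked_singleton fun v hv => .inr hv
    · obtain rfl : x = d := by
        have := (hu.adj_iff x).1 hx
        simp only [Finset.mem_insert, Finset.mem_singleton, not_or] at hxP
        tauto
      exact hDd

theorem exists_linked_ne (hcd : G.Adj c d)
    (hD : IsComponentAvoiding G (insert u (G.neighborSet u)) D) {x : V} (hx : x ∈ [a, b, e]) :
    ∃ y ∈ [a, b, e], y ≠ x ∧ Linked G D {y} := by
  by_contra! hN
  have hadj := hu.adj
  refine hu.isCritical.not_isFarSide_of_isClique (F := {u}) (P := {x, c, d}) (p := x)
    (connected_induce_singleton u) ?_ (by simp) Finset.card_le_three (isClique_erase_of_adj hcd) ?_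
    (hD.isFarSide hu.toIsCriticalUnrooted ?_ ?_ ?_)
  · have hxu := (hadj x (by grind)).ne
    simp [hxu, (hadj c (by simp)).ne, (hadj d (by simp)).ne]
  · have hxu := hadj x (by grind)
    simp [hxu, (hadj c (by simp)), (hadj d (by simp))]
  · simp
  · have hxu := hadj x (by grind)
    simp [Set.insert_subset_iff, hxu, (hadj c (by simp)), (hadj d (by simp))]
  · rintro y (rfl | hy) hyP
    · exact hD.not_linked_singleton fun v hv => .inr hv
    · have := (hu.adj_iff y).1 hy
      exact hN y (by grind) (by grind)

theorem not_isComponentAvoiding (hcd : G.Adj c d) :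
    ¬ IsComponentAvoiding G (insert u (G.neighborSet u)) D := by
  intro hD
  have hDd := hu.linked_of_isComponentAvoiding hcd hD
  have hDc := hu.reflect.linked_of_isComponentAvoiding hcd.symm hD
  have hpair {x y : V} (h : Linked G D {x} ∨ Linked G D {y}) : Linked G D {x, y} := by
    simp only [Linked, Set.mem_singleton_iff, exists_eq_left, Set.mem_insert_iff, exists_eq_or_imp,
      ↓existsAndEq, true_and] at h ⊢
    grind
  have ha := hu.not_linked_of_linked hcd hD hDc hDd
  have hb := hu.swap_sides.not_linked_of_linked hcd hD hDc hDd
  obtain ⟨x, hx, -, hDx⟩ := hu.exists_linked_ne hcd hD (x := e) (by simp)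
  obtain ⟨y, hy, hyx, hDy⟩ := hu.exists_linked_ne hcd hD (x := x) hx
  grind

theorem not_adj : ¬ G.Adj c d := by
  intro hcd
  have hadj := hu.adj
  have hl := hu.adj_left
  have hr := hu.adj_right
  have hnd := hu.nodup
  have hclosed {v w} (hvw : G.Adj v w) : w ∈ insert u (G.neighborSet u) := by
    by_contra hw
    obtain ⟨D, -, hD⟩ := exists_isComponentAvoiding hw ⟨v, hvw.symm⟩
    exact hu.not_isComponentAvoiding hcd hD
  have hall {v w} (huv : G.Adj u v) (huw : G.Adj u w) (hvw : w ≠ v) : G.Adj v w := by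
    refine (adj_iff_mem_of_card_le_degree (S := insert u ((G.neighborFinset u).erase v))
      (fun x hvx => ?_) ?_ w).2 (by simp [hvw, huw])
    · have := hclosed hvx
      simpa [hvx.ne'] using this
    · refine (Finset.card_insert_le _ _).trans ?_
      rw [Finset.card_erase_of_mem (by simpa using huv), card_neighborFinset_eq_degree,
          hu.degree_eq]
      exact hu.five_le_degree huv.symm
  refine hu.isCritical.not_hasTargetMinor (.inl (hasMinor_K6minus_of_adj (a := a) (b := b) (c := u)
    (d := c) (e := d) (f := e) ?_ ?_ ?_ ?_))
  · grind
  · simp [(hadj a (by simp)).symm, hl]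
  · simp [(hadj b (by simp)).symm, hr]
  · simp only [List.pairwise_cons, List.mem_cons, List.not_mem_nil, or_false, forall_eq_or_imp,
      true_or, or_true, hadj, forall_eq, and_self, hcd, true_and, IsEmpty.forall_iff, implies_true,
      List.Pairwise.nil, and_true]
    grind

end IsK23Center

end

section

variable {V : Type*} [Fintype V] {G : SimpleGraph V} {u w w' a b c d e : V} {D : Set V}

namespace IsK23Center

variable (hu : IsK23Center G u a b c d e)

include hu

theorem not_adj_right {x y : V} (hx : x ∈ [c, d, e]) (hy : y ∈ [c, d, e]) : ¬ G.Adj x y := by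
  have hcd := hu.not_adj
  have hde := hu.rotate.not_adj
  have hec := hu.rotate.rotate.not_adj
  simp only [List.mem_cons, List.not_mem_nil, or_false] at hx hy
  grind [G.adj_comm x y, G.irrefl (v := x)]

theorem left_of_adj : ¬ G.Adj a b ∧ G.degree a = 5 := by
  obtain ⟨x, y, hxy, hnxy, hdx, hdy, hux, huy, hcx, hcy⟩ :=
    hu.exists_nonadj_common_neighbors hu.degree_eq (hu.adj c (by simp))
  have hmem {v} (huv : G.Adj u v) (hcv : G.Adj c v) : v = a ∨ v = b := by
    by_contra hv
    have := (hu.adj_iff v).1 huv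
    exact hu.not_adj_right (x := c) (y := v) (by simp) (by grind) hcv
  have hx := hmem hux hcx
  have hy := hmem huy hcy
  grind [G.adj_comm a b]

theorem exists_opposite : ∃ w, w ≠ u ∧ ¬ G.Adj u w ∧ (∀ v ∈ [a, c, d, e], G.Adj w v) ∧
    ∀ v, G.Adj a v ↔ v ∈ [u, c, d, e, w] := by
  obtain ⟨hab, hda⟩ := hu.left_of_adj
  obtain ⟨w, haw, hwu, hwc, hwd, hwe⟩ := exists_adj_ne_four hda.ge u c d e
  have hau : G.Adj a u := (hu.adj a (by simp)).symm
  have hnd := hu.nodup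
  have hadj := hu.adj
  have hl := hu.adj_left
  have hiff := adj_iff_mem_of_degree_le_length (l := [u, c, d, e, w])
    (by
      have hne : ∀ v ∈ [c, d, e], u ≠ v := fun v hv => (hadj v (by simp_all)).ne
      clear * - hnd hne hwu hwc hwd hwe
      grind) (by simp [hau, haw, hl]) hda.le
  have huw : ¬ G.Adj u w := by
    intro huw
    have := (hu.adj_iff w).1 huw
    grind [haw.ne]
  have hright {x} (hx : x ∈ [c, d, e]) : G.Adj w x := by
    obtain ⟨y, z, hyz, -, -, -, hay, haz, hxy, hxz⟩ :=
      hu.exists_nonadj_common_neighbors hda (hl x hx)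
    have hmem {v} (hav : G.Adj a v) (hxv : G.Adj x v) : v = u ∨ v = w := by
      have := (hiff v).1 hav
      have := hu.not_adj_right (x := x) (y := v) hx
      grind
    grind [hmem hay hxy, hmem haz hxz, hxy.symm, hxz.symm]
  exact ⟨w, hwu, huw, by simp [haw.symm, hright], hiff⟩

theorem not_linked_of_opposite (hwu : w ≠ u)
    (hw : ∀ v ∈ [a, b, c, d, e], G.Adj w v)
    (hD : IsComponentAvoiding G (insert w (insert u (G.neighborSet u))) D)
    (hDc : Linked G D {c}) : ¬ Linked G D {d} := by
  intro hDd
  obtain ⟨hwD, huD, hND⟩ : w ∉ D ∧ u ∉ D ∧ ∀ v, G.Adj u v → v ∉ D := by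
    simpa [Set.disjoint_right] using hD.disjoint
  have hadj := hu.adj
  have hl := hu.adj_left
  have hr := hu.adj_right
  have hnd := hu.nodup
  obtain ⟨r, hr', c', rfl, hrc⟩ := hDc
  refine hu.isCritical.not_hasTargetMinor (.inl (hasMinor_K6minus_of_branchSets
    (A := {u}) (B := {w})
    (C := {b, e}) (D := {a}) (E := insert c' D) (F := {d}) ?_ ?_ ?_ ?_ ?_))
  · simp [connected_induce_insert hD.connected hr' hrc.symm,
      induce_pair_connected_of_adj (hr e (by simp))]
  · have huX {v} (hv : v ∈ [a, b, c', d, e]) := (hadj v hv).ne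
    have hwX {v} (hv : v ∈ [a, b, c', d, e]) := (hw v hv).ne
    simp only [List.pairwise_cons, List.mem_cons, List.not_mem_nil, or_false, forall_eq_or_imp,
      forall_eq, Set.disjoint_left, Set.mem_insert_iff, Set.mem_singleton_iff, List.nodup_cons] at *
    grind
  · simp_all [Linked]
  · simp_all [Linked]
  · simp_all [Linked, G.adj_comm]

theorem opposite_ne (hwu : w ≠ u) (huw : ¬ G.Adj u w) (hw : ∀ v ∈ [a, c, d, e], G.Adj w v)
    (ha : ∀ v, G.Adj a v ↔ v ∈ [u, c, d, e, w]) : ¬ ∀ v, G.Adj b v ↔ v ∈ [u, c, d, e, w] := by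
  intro hb
  have hadj := hu.adj
  have hwb : G.Adj b w := by simp [hb]
  have hwall : ∀ v ∈ [a, b, c, d, e], G.Adj w v := by grind [hwb.symm]
  obtain ⟨r, hcr, hru, hra, hrb, hrw⟩ := exists_adj_ne_four
    (hu.five_le_degree (hw c (by simp)).symm) u a b w
  have hur : ¬ G.Adj u r := by
    intro hur
    have := (hu.adj_iff r).1 hur
    exact hu.not_adj_right (x := c) (y := r) (by simp) (by grind) hcr
  obtain ⟨D, hrD, hD⟩ := exists_isComponentAvoiding
    (X := insert w (insert u (G.neighborSet u))) (r := r) (by simp [*]) ⟨c, hcr.symm⟩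
  have hDc : Linked G D {c} := ⟨r, hrD, c, rfl, hcr.symm⟩
  have hX : ∀ v ∈ [u, c, d, e, w], v ∈ insert w (insert u (G.neighborSet u)) := by simp [hadj]
  refine hu.isCritical.not_isFarSide_of_isClique (F := {a}) (P := {c, w}) (p := c)
    (connected_induce_singleton a) ?_ (by simp) (Finset.card_le_two.trans (by lia)) ?_ ?_
    (hD.isFarSide hu.toIsCriticalUnrooted ?_ ?_ ?_)
  · simp [(hu.adj_left c (by simp)).ne, (hw a (by simp)).ne']
  · simp [(hw c (by simp)).ne', IsClique]
  · simp [ha]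
  · simp [hadj]
  · simp [Set.insert_subset_iff, hadj]
  · intro x hx hxP
    simp only [Finset.mem_insert, Finset.mem_singleton, not_or] at hxP
    obtain rfl | rfl | hx := hx
    · exact absurd rfl hxP.2
    · exact hD.not_linked_singleton fun v hv => .inr (.inr hv)
    · obtain rfl | rfl | rfl | rfl | rfl := (hu.adj_iff x).1 hx
      · exact hD.not_linked_singleton fun v hv => hX v ((ha v).1 hv)
      · exact hD.not_linked_singleton fun v hv => hX v ((hb v).1 hv)
      · exact absurd rfl hxP.1
      · exact hu.not_linked_of_opposite hwu hwall hD hDc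
      · exact hu.rotate.rotate.reflect.not_linked_of_opposite hwu (by grind) hD hDc

theorem false : False := by
  obtain ⟨w, hwu, huw, hw, ha⟩ := hu.exists_opposite
  obtain ⟨w', hwu', huw', hw', hb⟩ := hu.swap_sides.exists_opposite
  obtain rfl | hww := eq_or_ne w w'
  · exact hu.opposite_ne hwu huw hw ha hb
  have hadj := hu.adj
  have hl := hu.adj_left
  have hr := hu.adj_right
  have hnd := hu.nodup
  refine hu.isCritical.not_hasTargetMinor (.inl (hasMinor_K6minus_of_branchSets
    (A := {a}) (B := {b})
    (C := {c, w}) (D := {d, w'}) (E := {e}) (F := {u}) ?_ ?_ ?_ ?_ ?_))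
  · simp [induce_pair_connected_of_adj (hw c (by simp)).symm,
      induce_pair_connected_of_adj (hw' d (by simp)).symm]
  · have huX {v} (hv : v ∈ [a, b, c, d, e]) := (hadj v hv).ne
    simp only [List.pairwise_cons, List.mem_cons, List.not_mem_nil, or_false, forall_eq_or_imp,
      forall_eq, Set.disjoint_left, Set.mem_insert_iff, Set.mem_singleton_iff, List.nodup_cons] at *
    grind
  · simp_all [Linked, G.adj_comm]
  · simp_all [Linked, G.adj_comm]
  · simp_all [Linked, G.adj_comm]

end IsK23Center

end

section

variable {V : Type*} [Fintype V] {G : SimpleGraph V} {u w h x y t a b c d e : V}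

namespace IsCriticalUnrooted

variable (hG : IsCriticalUnrooted G)

include hG

theorem adj_of_three_common_neighbors (hu : G.degree u = 5) (hnd : [h, x, y, t, w].Nodup)
    (hadj : ∀ v ∈ [h, x, y, t, w], G.Adj u v) (hh : ∀ v ∈ [x, y, t], G.Adj h v) : G.Adj t w := by
  by_contra htw
  have hiff := adj_iff_mem_of_degree_le_length hnd hadj hu.le
  have hmem {s v : V} (hs : s = t ∨ s = w) (huv : G.Adj u v) (hsv : G.Adj s v) :
      v = h ∨ v = x ∨ v = y := by
    have := (hiff v).1 huv
    grind [hsv.ne, hsv.symm]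
  have hxy {s : V} (hs : s = t ∨ s = w) : G.Adj x s ∧ G.Adj y s := by
    obtain ⟨p, q, hpq, hnpq, -, -, hup, huq, hsp, hsq⟩ :=
      hG.exists_nonadj_common_neighbors hu (hadj s (by grind))
    have hp := hmem hs hup hsp
    have hq := hmem hs huq hsq
    have hhx := hh x (by simp)
    have hhy := hh y (by simp)
    grind [hsp.symm, hsq.symm, hhx.symm, hhy.symm]
  have hK : IsK23Center G u x y h t w :=
    { hG with
      degree_eq := hu
      nodup := by grind
      adj := by grind
      adj_left := by simp [hxy, (hh x (by simp)).symm]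
      adj_right := by simp [hxy, (hh y (by simp)).symm] }
  exact hK.false

theorem not_nodup_common_neighbors (hu : G.degree u = 5) (huh : G.Adj u h)
    (hadj : ∀ v ∈ [x, y, t], G.Adj u v ∧ G.Adj h v) : ¬ [x, y, t].Nodup := by
  intro hnd
  obtain ⟨w, huw, hwh, hwx, hwy, hwt⟩ := exists_adj_ne_four hu.ge h x y t
  have hne : ∀ v ∈ [x, y, t], h ≠ v := fun v hv => (hadj v hv).2.ne
  have hadjw {p q r : V} (hperm : [p, q, r].Perm [x, y, t]) : G.Adj r w := by
    have hperm' : [h, p, q, r, w].Perm [h, x, y, t, w] := (hperm.append_right [w]).cons h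
    have hadj' : ∀ v ∈ [h, x, y, t, w], G.Adj u v := by grind
    exact hG.adj_of_three_common_neighbors hu (hperm'.nodup_iff.2 (by grind))
      (fun v hv => hadj' v (hperm'.mem_iff.1 hv)) (fun v hv => (hadj v (hperm.mem_iff.1 hv)).2)
  have hxw := hadjw (p := y) (q := t) (r := x) (by grind)
  have hyw := hadjw (p := x) (q := t) (r := y) (by grind)
  have htw := hadjw (List.Perm.refl [x, y, t])
  have hK : IsK23Center G u h w x y t :=
    { hG with
      degree_eq := hu
      nodup := by grind
      adj := by grind
      adj_left := fun v hv => (hadj v hv).2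
      adj_right := by simp [hxw.symm, hyw.symm, htw.symm] }
  exact hK.false

theorem exists_commonNeighbors_eq (hu : G.degree u = 5) (huw : G.Adj u w) (huh : G.Adj u h)
    (hwh : G.Adj w h) : G.degree h = 5 ∧ ∃ r, G.degree r = 5 ∧ r ≠ h ∧ ¬ G.Adj h r ∧
      G.commonNeighbors u w = {h, r} := by
  obtain ⟨a, b, hab, hnab, hda, hdb, hua, hub, hwa, hwb⟩ := hG.exists_nonadj_common_neighbors hu huw
  have hN : G.commonNeighbors u w = {a, b} := by
    refine Set.Subset.antisymm (fun v hv => ?_)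
      (by simp [Set.insert_subset_iff, mem_commonNeighbors, *])
    by_contra! hne
    simp only [Set.mem_insert_iff, Set.mem_singleton_iff, not_or] at hne
    exact hG.not_nodup_common_neighbors (x := a) (y := b) (t := v) hu huw
      (by simp_all [mem_commonNeighbors])
      (by simp [hab, Ne.symm hne.1, Ne.symm hne.2])
  obtain rfl | rfl : h = a ∨ h = b := by
    simpa [hN] using G.mem_commonNeighbors.2 ⟨huh, hwh⟩
  · exact ⟨hda, b, hdb, hab.symm, hnab, hN⟩
  · exact ⟨hdb, a, hda, hab, fun h => hnab h.symm, hN.trans (Set.pair_comm _ _)⟩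

end IsCriticalUnrooted

end

/-! ### Growing the icosahedron -/

section

variable {V : Type*} [Fintype V] {G : SimpleGraph V} {u h p q r s : V}

theorem eq_or_eq_add_or_eq_sub (i j : Fin 5) :
    j = i ∨ j = i + 1 ∨ j = i + 2 ∨ j = i - 2 ∨ j = i - 1 := by
  decide +revert

/-- The neighbourhood of `u` induces the 5-cycle `f 0, …, f 4`, whose vertices have degree 5. -/
structure IsFiveWheel (G : SimpleGraph V) (u : V) (f : Fin 5 → V) : Prop where
  adj_iff : ∀ v, G.Adj u v ↔ v ∈ Set.range f
  rim : ∀ i, G.Adj (f i) (f (i + 1))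
  not_adj : ∀ i, ¬ G.Adj (f i) (f (i + 2))
  ne : ∀ i, f i ≠ f (i + 2)
  degree_eq : ∀ i, G.degree (f i) = 5

namespace IsFiveWheel

variable {f : Fin 5 → V} (hf : IsFiveWheel G u f)

include hf

theorem adj (i : Fin 5) : G.Adj u (f i) :=
  (hf.adj_iff _).2 (Set.mem_range_self i)

theorem eq_or_eq_of_adj {i : Fin 5} {v : V} (huv : G.Adj u v) (hv : G.Adj (f i) v) :
    v = f (i + 1) ∨ v = f (i - 1) := by
  obtain ⟨j, rfl⟩ := (hf.adj_iff v).1 huv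
  obtain rfl | rfl | rfl | rfl | rfl := eq_or_eq_add_or_eq_sub i j
  · exact absurd hv G.irrefl
  · exact .inl rfl
  · exact absurd hv (hf.not_adj i)
  · exact absurd hv.symm (by simpa using hf.not_adj (i - 2))
  · exact .inr rfl

theorem injective : Function.Injective f := by
  intro i j hij
  obtain rfl | rfl | rfl | rfl | rfl := eq_or_eq_add_or_eq_sub i j
  · rfl
  · exact absurd hij (hf.rim i).ne
  · exact absurd hij (hf.ne i)
  · exact absurd hij.symm (by simpa using hf.ne (i - 2))
  · exact absurd hij.symm (by simpa using (hf.rim (i - 1)).ne)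

end IsFiveWheel

namespace IsCriticalUnrooted

variable (hG : IsCriticalUnrooted G)

include hG

theorem ne_of_commonNeighbors_eq (hu : G.degree u = 5) (hadj : ∀ v ∈ [h, p, q, r], G.Adj u v)
    (hnd : [h, p, q, r].Nodup) (hh : G.commonNeighbors u h = {p, q})
    (hp : G.commonNeighbors u p = {h, r}) (hq : G.commonNeighbors u q = {h, s}) : r ≠ s := by
  rintro rfl
  obtain ⟨w, huw, hwh, hwp, hwq, hwr⟩ := exists_adj_ne_four hu.ge h p q r
  have hiff := adj_iff_mem_of_degree_le_length (l := [h, p, q, r, w]) (by grind) (by simp_all) hu.le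
  have heq {v} (huv : G.Adj u v) (hwv : G.Adj w v) : v = r := by
    have hh' := Set.ext_iff.1 hh w
    have hp' := Set.ext_iff.1 hp w
    have hq' := Set.ext_iff.1 hq w
    simp only [mem_commonNeighbors, Set.mem_insert_iff, Set.mem_singleton_iff] at hh' hp' hq'
    have := (hiff v).1 huv
    grind [hwv.symm, hwv.ne]
  obtain ⟨a, b, hab, -, -, -, hua, hub, hwa, hwb⟩ := hG.exists_nonadj_common_neighbors hu huw
  exact hab ((heq hua hwa).trans (heq hub hwb).symm)

theorem exists_isFiveWheel (hu : G.degree u = 5) (hadj : ∀ v ∈ [h, p, q], G.Adj u v)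
    (hhp : G.Adj h p) (hhq : G.Adj h q) (hpq : p ≠ q) :
    ∃ r s, IsFiveWheel G u ![p, h, q, s, r] := by
  obtain ⟨huh, hup, huq⟩ : G.Adj u h ∧ G.Adj u p ∧ G.Adj u q := by simpa using hadj
  obtain ⟨hdp, q', hdq, -, hnpq, hh⟩ := hG.exists_commonNeighbors_eq hu huh hup hhp
  obtain rfl : q = q' := by
    have := hh ▸ G.mem_commonNeighbors.2 ⟨huq, hhq⟩
    simpa [hpq.symm] using this
  obtain ⟨hdh, r, hdr, hrh, hnhr, hp⟩ := hG.exists_commonNeighbors_eq hu hup huh hhp.symm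
  obtain ⟨-, s, hds, hsh, hnhs, hq⟩ := hG.exists_commonNeighbors_eq hu huq huh hhq.symm
  obtain ⟨hur, hpr⟩ : G.Adj u r ∧ G.Adj p r := G.mem_commonNeighbors.1 (by simp [hp])
  obtain ⟨hus, hqs⟩ : G.Adj u s ∧ G.Adj q s := G.mem_commonNeighbors.1 (by simp [hq])
  have hrq : r ≠ q := fun h => hnhr (h ▸ hhq)
  have hsp : s ≠ p := fun h => hnhs (h ▸ hhp)
  have hnd : [h, p, q, r].Nodup := by grind [hhp.ne, hhq.ne, hpr.ne]
  have hrs := hG.ne_of_commonNeighbors_eq hu (by simp [*]) hnd hh hp hq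
  have hiff := adj_iff_mem_of_degree_le_length (l := [p, h, q, s, r]) (by grind [hqs.ne])
    (by simp [*]) hu.le
  have hnps : ¬ G.Adj p s := fun hps => by
    have := hp ▸ G.mem_commonNeighbors.2 ⟨hus, hps⟩
    simp_all
  have hnqr : ¬ G.Adj q r := fun hqr => by
    have := hq ▸ G.mem_commonNeighbors.2 ⟨hur, hqr⟩
    simp_all
  have hsr : G.Adj s r := by
    obtain ⟨-, t, -, htp, hnpt, ht⟩ := hG.exists_commonNeighbors_eq hu hur hup hpr.symm
    obtain ⟨hut, hrt⟩ : G.Adj u t ∧ G.Adj r t := G.mem_commonNeighbors.1 (by simp [ht])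
    have hth : t ≠ h := by
      rintro rfl
      exact hnpt hhp.symm
    have := (hiff t).1 hut
    grind [hrt.symm, hrt.ne]
  refine ⟨r, s, fun v => ?_, fun i => ?_, fun i => ?_, fun i => ?_, fun i => ?_⟩
  · simp [hiff, -Set.mem_range, or_comm, or_left_comm]
  · fin_cases i
    exacts [hhp.symm, hhq, hqs, hsr, hpr.symm]
  · fin_cases i
    exacts [hnpq, hnhs, hnqr, fun h => hnps h.symm, fun h => hnhr h.symm]
  · fin_cases i
    exacts [hpq, hsh.symm, hrq.symm, hsp, hrh]
  · fin_cases i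
    exacts [hdp, hdh, hdq, hds, hdr]

end IsCriticalUnrooted

end

section

variable {V : Type*} [Fintype V] {G : SimpleGraph V} {u t : V} {b c : Fin 5 → V}

theorem IsFiveWheel.exists_second_ring (hb : IsFiveWheel G u b) (hG : IsCriticalUnrooted G) :
    ∃ c : Fin 5 → V, ∀ i, IsFiveWheel G (b i) ![b (i - 1), u, b (i + 1), c (i + 1), c i] := by
  have hrim (i) : G.Adj (b i) (b (i - 1)) := by simpa using (hb.rim (i - 1)).symm
  have hne (i) : b (i - 1) ≠ b (i + 1) := by
    have := hb.ne (i - 1)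
    rwa [show i - 1 + 2 = i + 1 by clear * -; decide +revert] at this
  have hwheel (i) : ∃ r s, IsFiveWheel G (b i) ![b (i - 1), u, b (i + 1), s, r] :=
    hG.exists_isFiveWheel (hb.degree_eq i) (by simp [hrim, hb.rim, (hb.adj i).symm]) (hb.adj _)
      (hb.adj _) (hne i)
  choose c s hc using hwheel
  refine ⟨c, fun i => ?_⟩
  suffices c (i + 1) = s i from this ▸ hc i
  have hadj : G.Adj (b i) (c (i + 1)) := by simpa using ((hc (i + 1)).rim 4).symm
  obtain h | h := (hc i).eq_or_eq_of_adj (i := 2) hadj ((hc (i + 1)).adj 4)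
  · exact h
  · exact absurd h ((hc (i + 1)).ne 4)

/-- `u` is the centre of a 5-wheel with rim `b`, and `c i` and `c (i + 1)` are the neighbours of
`b i` beyond that wheel: the icosahedron without its vertex antipodal to `u`. -/
structure IsTwoRingWheel (G : SimpleGraph V) (u : V) (b c : Fin 5 → V) : Prop where
  center : IsFiveWheel G u b
  wheel : ∀ i, IsFiveWheel G (b i) ![b (i - 1), u, b (i + 1), c (i + 1), c i]

namespace IsTwoRingWheel

variable (h : IsTwoRingWheel G u b c)

include h

theorem adj_outer (i : Fin 5) : G.Adj (b i) (c i) :=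
  (h.wheel i).adj 4

theorem adj_outer_succ (i : Fin 5) : G.Adj (b i) (c (i + 1)) :=
  (h.wheel i).adj 3

theorem outer_adj (i : Fin 5) : G.Adj (c i) (c (i + 1)) :=
  ((h.wheel i).rim 3).symm

theorem center_not_adj_outer (i : Fin 5) : ¬ G.Adj u (c i) :=
  fun hu => (h.wheel i).not_adj 4 hu.symm

theorem center_ne_outer (i : Fin 5) : u ≠ c i :=
  ((h.wheel i).ne 4).symm

theorem inner_ne_outer (i j : Fin 5) : b i ≠ c j :=
  fun hij => h.center_not_adj_outer j (hij ▸ h.center.adj i)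

theorem exists_apex (hG : IsCriticalUnrooted G) :
    ∃ t, ∀ i, IsFiveWheel G (c i) ![b (i - 1), b i, c (i + 1), t, c (i - 1)] := by
  have hin (i) : G.Adj (b (i - 1)) (c i) := by simpa using h.adj_outer_succ (i - 1)
  have hout (i) : G.Adj (c i) (c (i - 1)) := by simpa using (h.outer_adj (i - 1)).symm
  have hwheel (i) : ∃ r s, IsFiveWheel G (c i) ![b (i - 1), b i, c (i + 1), s, r] :=
    hG.exists_isFiveWheel ((h.wheel i).degree_eq 4)
      (by simp [(hin i).symm, (h.adj_outer i).symm, h.outer_adj])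
      ((h.wheel i).adj 0) (h.adj_outer_succ i) ((h.wheel i).ne 3).symm
  choose r t hc using hwheel
  have hr (i) : r i = c (i - 1) := by
    obtain hi | hi := (hc i).eq_or_eq_of_adj (i := 0) (hout i) (h.adj_outer (i - 1))
    · exact absurd hi.symm (h.inner_ne_outer i _)
    · exact hi.symm
  simp only [hr] at hc
  have ht (i) : t (i + 1) = t i := by
    have hadj : G.Adj (c i) (t (i + 1)) := by simpa using ((hc (i + 1)).rim 3).symm
    obtain hi | hi := (hc i).eq_or_eq_of_adj (i := 2) hadj ((hc (i + 1)).adj 3)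
    · exact hi
    · exact absurd hi (by simpa using (hc (i + 1)).ne 3)
  have ht₀ (i) : t i = t 0 := by
    fin_cases i
    exacts [rfl, ht 0, (ht 1).trans (ht 0), (ht 2).trans ((ht 1).trans (ht 0)), (ht 4).symm]
  exact ⟨t 0, fun i => ht₀ i ▸ hc i⟩

theorem hasMinor_Icosa (ht : ∀ i, IsFiveWheel G (c i) ![b (i - 1), b i, c (i + 1), t, c (i - 1)]) :
    G.HasMinor Icosa := by
  have hbt (i) : b i ≠ t := (ht i).ne 1
  have htc (i) : G.Adj t (c i) := ((ht i).adj 3).symm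
  have hinv {i j} (hij : G.Adj (c i) (b j)) : j = i - 1 ∨ j = i := by
    obtain ⟨k, hk⟩ := ((ht i).adj_iff _).1 hij
    fin_cases k
    exacts [.inl (h.center.injective hk.symm), .inr (h.center.injective hk.symm),
      absurd hk.symm (h.inner_ne_outer _ _), absurd hk.symm (hbt j),
      absurd hk.symm (h.inner_ne_outer _ _)]
  have hc : Function.Injective c := by
    intro i j hij
    have hj := hinv (hij ▸ (h.adj_outer j).symm)
    have hj' := hinv (i := i) (j := j - 1) (hij ▸ (by simpa using (h.adj_outer_succ (j - 1)).symm))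
    clear * - hj hj'
    decide +revert
  refine hasMinor_Icosa_of_adj u t b c h.center.injective hc h.center.adj h.center.rim h.adj_outer
    h.adj_outer_succ h.outer_adj htc h.center_ne_outer ?_ h.inner_ne_outer hbt
  rintro rfl
  exact h.center_not_adj_outer 0 (htc 0)

end IsTwoRingWheel

theorem IsCriticalUnrooted.false (hG : IsCriticalUnrooted G) : False := by
  obtain ⟨u, hu⟩ := hG.exists_degree_eq_five
  obtain ⟨h, huh⟩ := (G.degree_pos_iff_exists_adj u).1 (by lia)
  obtain ⟨p, q, hpq, -, -, -, hup, huq, hhp, hhq⟩ := hG.exists_nonadj_common_neighbors hu huh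
  obtain ⟨r, s, hb⟩ := hG.exists_isFiveWheel hu (by simp [*]) hhp hhq hpq
  obtain ⟨c, hc⟩ := hb.exists_second_ring hG
  have hring : IsTwoRingWheel G u _ c := ⟨hb, hc⟩
  obtain ⟨t, ht⟩ := hring.exists_apex hG
  exact hG.isCritical.not_hasTargetMinor (.inr (hring.hasMinor_Icosa ht))

end

section

variable {V : Type*} [Fintype V] {G : SimpleGraph V} {K : Finset V}

theorem isRooted_empty (hdeg : 5 ≤ G.minDegree) : IsRooted G ∅ where
  isRoot := .inl (by simp)
  five_le_degree v _ _ := hdeg.trans (G.minDegree_le_degree v)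
  exists_notMem := by
    obtain ⟨v⟩ : Nonempty V := by
      by_contra! hV
      simp [minDegree_of_subsingleton] at hdeg
    obtain ⟨w, hvw⟩ := (G.degree_pos_iff_exists_adj v).1
      (by grind [G.minDegree_le_degree v])
    exact ⟨v, ⟨w, hvw⟩, by simp⟩

theorem IsRooted.filter_degree_le_four (hK : IsRooted G K) (hclique : G.IsClique (K : Set V))
    (hcard : K.card ≤ 3) : IsRooted G (K.filter fun v => v ∈ G.support ∧ G.degree v ≤ 4) where
  isRoot :=
    .inl ⟨hclique.subset (Finset.filter_subset _ K), (Finset.card_filter_le _ _).trans hcard⟩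
  five_le_degree v hv hvK := by
    by_contra! hdeg
    exact hdeg.not_ge (hK.five_le_degree v hv fun h => hvK (by grind))
  exists_notMem :=
    hK.exists_notMem.imp fun v hv => ⟨hv.1, fun h => hv.2 (Finset.mem_of_mem_filter v h)⟩

theorem IsCritical.not_isRooted_of_degree_le_four (hG : IsCritical G)
    (hclique : G.IsClique (K : Set V)) (hcard : K.card ≤ 3)
    (hK : ∀ v ∈ K, v ∈ G.support ∧ G.degree v ≤ 4) : ¬ IsRooted G K := by
  intro hroot
  obtain h | h | h | h : K.card = 0 ∨ K.card = 1 ∨ K.card = 2 ∨ K.card = 3 := by lia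
  · obtain rfl := Finset.card_eq_zero.1 h
    exact IsCriticalUnrooted.false ⟨hG, hroot⟩
  · obtain ⟨x, rfl⟩ := Finset.card_eq_one.1 h
    obtain ⟨⟨t, hxt⟩, hx⟩ := hK x (by simp)
    exact hG.not_isRooted_singleton hx hxt hroot
  · obtain ⟨x, y, hxy, rfl⟩ := Finset.card_eq_two.1 h
    exact hG.not_isRooted_pair (hclique (by simp) (by simp) hxy) (hK x (by simp)).2
      (hK y (by simp)).2 hroot
  · obtain ⟨x, y, z, hxy, hxz, hyz, rfl⟩ := is3Clique_iff.1 ⟨hclique, h⟩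
    exact hG.not_isRooted_triangle hxy hyz hxz.symm (hK x (by simp)).2 (hK y (by simp)).2
      (hK z (by simp)).2 hroot

theorem IsRooted.not_isCritical (hK : IsRooted G K) : ¬ IsCritical G := by
  intro hG
  obtain ⟨hclique, hcard⟩ | ⟨x, t₁, t₂, t₃, t₄, rfl, hwheel⟩ := hK.isRoot
  · exact hG.not_isRooted_of_degree_le_four (hclique.subset (Finset.filter_subset _ K))
      ((Finset.card_filter_le _ _).trans hcard) (fun v hv => (Finset.mem_filter.1 hv).2)
      (hK.filter_degree_le_four hclique hcard)
  · exact IsCriticalWheel.false ⟨hwheel, hG, hK⟩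

end

end MinDegreeFive

theorem minDegree5_K6minus_or_icosahedron_minor_general {V : Type*} [Fintype V]
    {G : SimpleGraph V} {K : Finset V} (hK : MinDegreeFive.IsRooted G K) :
    G.HasMinor K6minus ∨ G.HasMinor Icosa :=
  MinDegreeFive.hasTargetMinor_of_not_isCritical
    (fun _ _ => MinDegreeFive.IsRooted.not_isCritical) hK

theorem minDegree5_K6minus_or_icosahedron_minor {V : Type*} [Fintype V] (G : SimpleGraph V)
    (hdeg : 5 ≤ G.minDegree) :
    G.HasMinor K6minus ∨ G.HasMinor Icosa :=
  minDegree5_K6minus_or_icosahedron_minor_general (MinDegreeFive.isRooted_empty hdeg)
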